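/- arXiv:2207.03381 — 9 statements merged into one kernel-verified Lean document; each statement's English description precedes it below -/
import Mathlib

section
/- Let G be a forest whose connected components T_1, …, T_m (m ≥ 1) are pairwise disjoint trees, each T_i having at least one edge, vertex bipartition (X_i, Y_i), and admitting a set-ordered graceful labeling f_i with max f_i(X_i) < min f_i(Y_i). Let p be the total number of vertices of G (so G has p − m edges). Then G admits a flawed set-ordered graceful labeling: there exists an injective map g : V(G) → {0, 1, …, p − 1} such that max g(X) < min g(Y), where X = X_1 ∪ … ∪ X_m and Y = Y_1 ∪ … ∪ Y_m, and the p − m induced edge labels g(uv) = |g(u) − g(v)|, over all edges uv of G, are pairwise distinct (hence form a (p − m)-element subset of {1, …, p − 1}). -/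
/-- `(X, Y)` is a bipartition of the graph `G`: every vertex lies in exactly one of `X, Y`,
and every edge joins a vertex of `X` to a vertex of `Y`. -/
def IsBipartitionOf {V : Type} (G : SimpleGraph V) (X Y : Set V) : Prop :=
  (∀ v : V, v ∈ X ∨ v ∈ Y) ∧ Disjoint X Y ∧
    ∀ ⦃u v : V⦄, G.Adj u v → (u ∈ X ∧ v ∈ Y) ∨ (u ∈ Y ∧ v ∈ X)

/-- The vertex/edge color membership constraints common to all `(k,d)`-total colorings:
colors of `X`-vertices are multiples of `d`, colors of `Y`-vertices and of edges lie in
`{k + jd : j ≥ 0}`. -/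
def KDTotalVertexCond {V : Type} (G : SimpleGraph V) (X Y : Set V) (k d : ℕ)
    (fV : V → ℕ) (fE : Sym2 V → ℕ) : Prop :=
  (∀ x ∈ X, d ∣ fV x) ∧
  (∀ y ∈ Y, ∃ j : ℕ, fV y = k + j * d) ∧
  (∀ ⦃u v : V⦄, G.Adj u v → ∃ j : ℕ, fE s(u, v) = k + j * d)

/-- The set of colors used on the edges of `G`. -/
def EdgeColorSet {V : Type} (G : SimpleGraph V) (fE : Sym2 V → ℕ) : Set ℕ :=
  {c : ℕ | ∃ u v : V, G.Adj u v ∧ fE s(u, v) = c}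

/-- The set `{k + jd : 0 ≤ j ≤ q - 1}`. -/
def ArithProgSet (k d q : ℕ) : Set ℕ := {c : ℕ | ∃ j : ℕ, j < q ∧ c = k + j * d}

/-- The odd set `{k + (2j - 1)d : 1 ≤ j ≤ q}`. -/
def OddArithProgSet (k d q : ℕ) : Set ℕ :=
  {c : ℕ | ∃ j : ℕ, 1 ≤ j ∧ j ≤ q ∧ c = k + (2 * j - 1) * d}

/-- A graceful `(k,d)`-total coloring of `G` (with bipartition `(X,Y)` and `q` edges). -/
def GracefulKDTotalColoring {V : Type} (G : SimpleGraph V) (X Y : Set V) (k d q : ℕ)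
    (fV : V → ℕ) (fE : Sym2 V → ℕ) : Prop :=
  KDTotalVertexCond G X Y k d fV fE ∧
  (∀ ⦃u v : V⦄, G.Adj u v → fE s(u, v) = Nat.dist (fV u) (fV v)) ∧
  EdgeColorSet G fE = ArithProgSet k d q

/-- A harmonious `(k,d)`-total coloring of `G`:
`f(uv) - k ≡ f(u) + f(v) - k (mod qd)` for every edge `uv`. -/
def HarmoniousKDTotalColoring {V : Type} (G : SimpleGraph V) (X Y : Set V) (k d q : ℕ)
    (fV : V → ℕ) (fE : Sym2 V → ℕ) : Prop :=
  KDTotalVertexCond G X Y k d fV fE ∧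
  (∀ ⦃u v : V⦄, G.Adj u v →
    Int.ModEq ((q * d : ℕ) : ℤ) ((fE s(u, v) : ℤ) - (k : ℤ))
      (((fV u : ℤ) + (fV v : ℤ)) - (k : ℤ))) ∧
  EdgeColorSet G fE = ArithProgSet k d q

/-- An edge-magic `(k,d)`-total coloring: `f(u) + f(uv) + f(v)` is constant. -/
def EdgeMagicKDTotalColoring {V : Type} (G : SimpleGraph V) (X Y : Set V) (k d q : ℕ)
    (fV : V → ℕ) (fE : Sym2 V → ℕ) : Prop :=
  KDTotalVertexCond G X Y k d fV fE ∧
  (∃ c : ℕ, ∀ ⦃u v : V⦄, G.Adj u v → fV u + fE s(u, v) + fV v = c) ∧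
  EdgeColorSet G fE = ArithProgSet k d q

/-- An edge-difference `(k,d)`-total coloring: `f(uv) + |f(u) - f(v)|` is constant. -/
def EdgeDifferenceKDTotalColoring {V : Type} (G : SimpleGraph V) (X Y : Set V) (k d q : ℕ)
    (fV : V → ℕ) (fE : Sym2 V → ℕ) : Prop :=
  KDTotalVertexCond G X Y k d fV fE ∧
  (∃ c : ℕ, ∀ ⦃u v : V⦄, G.Adj u v → fE s(u, v) + Nat.dist (fV u) (fV v) = c) ∧
  EdgeColorSet G fE = ArithProgSet k d q

/-- A graceful-difference `(k,d)`-total coloring: `||f(u) - f(v)| - f(uv)|` is constant. -/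
def GracefulDifferenceKDTotalColoring {V : Type} (G : SimpleGraph V) (X Y : Set V) (k d q : ℕ)
    (fV : V → ℕ) (fE : Sym2 V → ℕ) : Prop :=
  KDTotalVertexCond G X Y k d fV fE ∧
  (∃ c : ℕ, ∀ ⦃u v : V⦄, G.Adj u v →
    ((Nat.dist (fV u) (fV v) : ℤ) - (fE s(u, v) : ℤ)).natAbs = c) ∧
  EdgeColorSet G fE = ArithProgSet k d q

/-- A felicitous-difference `(k,d)`-total coloring: `|f(u) + f(v) - f(uv)|` is constant. -/
def FelicitousDifferenceKDTotalColoring {V : Type} (G : SimpleGraph V) (X Y : Set V) (k d q : ℕ)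
    (fV : V → ℕ) (fE : Sym2 V → ℕ) : Prop :=
  KDTotalVertexCond G X Y k d fV fE ∧
  (∃ c : ℕ, ∀ ⦃u v : V⦄, G.Adj u v →
    (((fV u : ℤ) + (fV v : ℤ)) - (fE s(u, v) : ℤ)).natAbs = c) ∧
  EdgeColorSet G fE = ArithProgSet k d q

/-- An edge-antimagic `(k,d)`-total coloring: the sums `f(u) + f(uv) + f(v)` over the edges
form the set `{2k + 2(a+j)d : 0 ≤ j ≤ q - 1}` for some `a ≥ 0`. -/
def EdgeAntimagicKDTotalColoring {V : Type} (G : SimpleGraph V) (X Y : Set V) (k d q : ℕ)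
    (fV : V → ℕ) (fE : Sym2 V → ℕ) : Prop :=
  KDTotalVertexCond G X Y k d fV fE ∧
  ∃ a : ℕ, {c : ℕ | ∃ u v : V, G.Adj u v ∧ fV u + fE s(u, v) + fV v = c}
      = {c : ℕ | ∃ j : ℕ, j < q ∧ c = 2 * k + 2 * (a + j) * d}

/-- An odd-edge graceful-difference `(k,d)`-total coloring. -/
def OddEdgeGracefulDifferenceKDTotalColoring {V : Type} (G : SimpleGraph V) (X Y : Set V)
    (k d q : ℕ) (fV : V → ℕ) (fE : Sym2 V → ℕ) : Prop :=
  KDTotalVertexCond G X Y k d fV fE ∧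
  (∃ c : ℕ, ∀ ⦃u v : V⦄, G.Adj u v →
    ((Nat.dist (fV u) (fV v) : ℤ) - (fE s(u, v) : ℤ)).natAbs = c) ∧
  EdgeColorSet G fE = OddArithProgSet k d q

/-- An odd-edge edge-difference `(k,d)`-total coloring. -/
def OddEdgeEdgeDifferenceKDTotalColoring {V : Type} (G : SimpleGraph V) (X Y : Set V)
    (k d q : ℕ) (fV : V → ℕ) (fE : Sym2 V → ℕ) : Prop :=
  KDTotalVertexCond G X Y k d fV fE ∧
  (∃ c : ℕ, ∀ ⦃u v : V⦄, G.Adj u v → fE s(u, v) + Nat.dist (fV u) (fV v) = c) ∧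
  EdgeColorSet G fE = OddArithProgSet k d q

/-- An odd-edge edge-magic `(k,d)`-total coloring. -/
def OddEdgeEdgeMagicKDTotalColoring {V : Type} (G : SimpleGraph V) (X Y : Set V)
    (k d q : ℕ) (fV : V → ℕ) (fE : Sym2 V → ℕ) : Prop :=
  KDTotalVertexCond G X Y k d fV fE ∧
  (∃ c : ℕ, ∀ ⦃u v : V⦄, G.Adj u v → fV u + fE s(u, v) + fV v = c) ∧
  EdgeColorSet G fE = OddArithProgSet k d q

/-- An odd-edge felicitous-difference `(k,d)`-total coloring. -/
def OddEdgeFelicitousDifferenceKDTotalColoring {V : Type} (G : SimpleGraph V) (X Y : Set V)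
    (k d q : ℕ) (fV : V → ℕ) (fE : Sym2 V → ℕ) : Prop :=
  KDTotalVertexCond G X Y k d fV fE ∧
  (∃ c : ℕ, ∀ ⦃u v : V⦄, G.Adj u v →
    (((fV u : ℤ) + (fV v : ℤ)) - (fE s(u, v) : ℤ)).natAbs = c) ∧
  EdgeColorSet G fE = OddArithProgSet k d q

/-- A set-ordered graceful labeling of `G` (with bipartition `(X,Y)` and `q` edges):
an injective map into `{0, …, q}` whose induced edge labels `|f(u) - f(v)|` are exactly
`{1, …, q}`, with `max f(X) < min f(Y)`. -/
def SetOrderedGracefulLabeling {V : Type} (G : SimpleGraph V) (X Y : Set V)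
    (f : V → ℕ) (q : ℕ) : Prop :=
  Function.Injective f ∧ (∀ v : V, f v ≤ q) ∧
  (∀ x ∈ X, ∀ y ∈ Y, f x < f y) ∧
  {c : ℕ | ∃ u v : V, G.Adj u v ∧ Nat.dist (f u) (f v) = c} = Set.Icc 1 q

/-- If the edge differences of a labeling of a finite tree exhaust `{1, …, |W| - 1}`, then
different edges have different differences. -/
theorem SimpleGraph.IsTree.edge_eq_of_dist_eq {W : Type} [Finite W] {T : SimpleGraph W}
    (hT : T.IsTree) {f : W → ℕ}
    (hf : ∀ c ∈ Set.Icc 1 (Nat.card W - 1), ∃ u v, T.Adj u v ∧ Nat.dist (f u) (f v) = c)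
    {u v u' v' : W} (h : T.Adj u v) (h' : T.Adj u' v')
    (heq : Nat.dist (f u) (f v) = Nat.dist (f u') (f v')) : s(u, v) = s(u', v') := by
  classical
  have := Fintype.ofFinite W
  let d : Sym2 W → ℕ :=
    Sym2.lift ⟨fun a b => Nat.dist (f a) (f b), fun a b => Nat.dist_comm _ _⟩
  have hsub : Finset.Icc 1 (Nat.card W - 1) ⊆ T.edgeFinset.image d := by
    intro c hc
    obtain ⟨a, b, hab, rfl⟩ := hf c (by simpa using hc)
    exact Finset.mem_image.2 ⟨s(a, b), by simpa using hab, rfl⟩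
  have hcard : (T.edgeFinset.image d).card = T.edgeFinset.card := by
    refine le_antisymm Finset.card_image_le ?_
    have h1 := Finset.card_le_card hsub
    have h2 := hT.card_edgeFinset
    rw [Nat.card_Icc, Nat.card_eq_fintype_card] at h1
    omega
  exact Finset.card_image_iff.1 hcard (by simpa using h) (by simpa using h') heq

/-- A labeling that is injective on `X` with values below `n` satisfies `|X| ≤ n`. -/
theorem ncard_le_of_forall_lt {V : Type} {X : Set V} {f : V → ℕ} (hf : Set.InjOn f X) {n : ℕ}
    (h : ∀ x ∈ X, f x < n) : X.ncard ≤ n := by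
  calc X.ncard = (f '' X).ncard := hf.ncard_image.symm
    _ ≤ (Set.Iio n).ncard := Set.ncard_le_ncard (by rintro _ ⟨x, hx, rfl⟩; exact h x hx)
    _ = n := by simp [Set.ncard_eq_toFinset_card']

/-- A labeling that is injective on `Y` with values in `(a, b)` satisfies `a + |Y| < b`. -/
theorem add_ncard_lt_of_forall_mem_Ioo {V : Type} {Y : Set V} {f : V → ℕ} (hf : Set.InjOn f Y)
    {a b : ℕ} (hab : a < b) (h : ∀ y ∈ Y, f y ∈ Set.Ioo a b) : a + Y.ncard < b := by
  have : Y.ncard ≤ (Set.Ioo a b).ncard := by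
    rw [← hf.ncard_image]
    exact Set.ncard_le_ncard (by rintro _ ⟨x, hx, rfl⟩; exact h x hx)
  rw [Set.ncard_eq_toFinset_card' (Set.Ioo a b), Set.toFinset_Ioo, Nat.card_Ioo] at this
  omega

theorem sum_Iio_add_le_sum_Iio {m : ℕ} (a : Fin m → ℕ) {i k : Fin m} (h : i < k) :
    ∑ j ∈ Finset.Iio i, a j + a i ≤ ∑ j ∈ Finset.Iio k, a j := by
  rw [add_comm, ← Finset.sum_insert (by simp)]
  refine Finset.sum_le_sum_of_subset fun j hj => ?_
  simp only [Finset.mem_insert, Finset.mem_Iio] at hj ⊢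
  omega

theorem sum_Ioi_add_le_sum_Ioi {m : ℕ} (a : Fin m → ℕ) {i k : Fin m} (h : i < k) :
    ∑ j ∈ Finset.Ioi k, a j + a k ≤ ∑ j ∈ Finset.Ioi i, a j := by
  rw [add_comm, ← Finset.sum_insert (by simp)]
  refine Finset.sum_le_sum_of_subset fun j hj => ?_
  simp only [Finset.mem_insert, Finset.mem_Ioi] at hj ⊢
  omega

theorem sum_Iio_add_add_sum_Ioi {m : ℕ} (a : Fin m → ℕ) (i : Fin m) :
    ∑ j ∈ Finset.Iio i, a j + a i + ∑ j ∈ Finset.Ioi i, a j = ∑ j, a j := by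
  rw [add_comm (∑ j ∈ Finset.Iio i, a j), ← Finset.sum_insert (by simp),
    ← Finset.sum_union (by
      rw [Finset.disjoint_left]
      intro j hj
      simp only [Finset.mem_insert, Finset.mem_Iio, Finset.mem_Ioi] at hj ⊢
      omega)]
  congr 1
  ext j
  simp only [Finset.mem_union, Finset.mem_insert, Finset.mem_Iio, Finset.mem_Ioi,
    Finset.mem_univ, iff_true]
  omega

theorem sum_ncard_eq_card {V : Type} [Fintype V] {m : ℕ} {P : Fin m → Set V}
    (hPart : ∀ v : V, ∃! i : Fin m, v ∈ P i) : ∑ i, (P i).ncard = Fintype.card V := by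
  classical
  choose c hc hc' using hPart
  have hP : ∀ i, (P i).ncard = (Finset.univ.filter fun v => c v = i).card := fun i => by
    rw [← Set.ncard_coe_finset]
    congr 1
    ext v
    simp only [Finset.coe_filter, Finset.mem_univ, true_and, Set.mem_ofPred_eq]
    exact ⟨fun h => (hc' v i h).symm, fun h => h ▸ hc v⟩
  simp_rw [hP]
  exact (Finset.card_eq_sum_card_fiberwise fun v _ => Finset.mem_univ (c v)).symm

/-- A forest whose components are trees (each with at least one edge) that
all admit set-ordered graceful labelings admits a flawed set-ordered graceful labeling. -/
theorem forest_flawed_set_ordered_graceful_labeling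
    {V : Type} [Fintype V] [DecidableEq V]
    (G : SimpleGraph V) (m : ℕ) (hm : 1 ≤ m)
    (P X Y : Fin m → Set V) (f : Fin m → V → ℕ)
    -- the `P i` partition the vertex set, and there is no edge between different parts,
    -- so the `P i` are the vertex sets of the connected components `T_i`
    (hPart : ∀ v : V, ∃! i : Fin m, v ∈ P i)
    (hNoCross : ∀ ⦃u v : V⦄, G.Adj u v → ∀ i : Fin m, u ∈ P i → v ∈ P i)
    -- each component is a tree with at least one edge
    (hTree : ∀ i : Fin m, (G.induce (P i)).IsTree)
    (hEdge : ∀ i : Fin m, ∃ u v : V, u ∈ P i ∧ v ∈ P i ∧ G.Adj u v)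
    -- `(X i, Y i)` is a vertex bipartition of the component `T_i`
    (hXY : ∀ i : Fin m, X i ∪ Y i = P i)
    (hDisj : ∀ i : Fin m, Disjoint (X i) (Y i))
    (hBip : ∀ i : Fin m, ∀ ⦃u v : V⦄, G.Adj u v → u ∈ P i → v ∈ P i →
      (u ∈ X i ∧ v ∈ Y i) ∨ (u ∈ Y i ∧ v ∈ X i))
    -- `f i` is a set-ordered graceful labeling of the component `T_i`,
    -- which has `Nat.card (P i) - 1` edges
    (hInj : ∀ i : Fin m, Set.InjOn (f i) (P i))
    (hBound : ∀ i : Fin m, ∀ v ∈ P i, f i v ≤ Nat.card (P i) - 1)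
    (hOrder : ∀ i : Fin m, ∀ x ∈ X i, ∀ y ∈ Y i, f i x < f i y)
    (hLabels : ∀ i : Fin m,
      {c : ℕ | ∃ u ∈ P i, ∃ v ∈ P i, G.Adj u v ∧ Nat.dist (f i u) (f i v) = c}
        = Set.Icc 1 (Nat.card (P i) - 1)) :
    -- conclusion: a flawed set-ordered graceful labeling of `G`
    ∃ g : V → ℕ,
      Function.Injective g ∧
      (∀ v : V, g v < Fintype.card V) ∧
      (∀ x y : V, (∃ i : Fin m, x ∈ X i) → (∃ i : Fin m, y ∈ Y i) → g x < g y) ∧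
      (∀ ⦃u v u' v' : V⦄, G.Adj u v → G.Adj u' v' → s(u, v) ≠ s(u', v') →
        Nat.dist (g u) (g v) ≠ Nat.dist (g u') (g v')) ∧
      (∀ ⦃u v : V⦄, G.Adj u v →
        1 ≤ Nat.dist (g u) (g v) ∧ Nat.dist (g u) (g v) ≤ Fintype.card V - 1) := by
  classical
  have hcard := sum_ncard_eq_card hPart
  choose c hc hc' using hPart
  have hPn : ∀ i, (P i).ncard = (X i).ncard + (Y i).ncard := fun i => by
    rw [← hXY i, Set.ncard_union_eq (hDisj i)]
  have hXP : ∀ i, X i ⊆ P i := fun i => hXY i ▸ Set.subset_union_left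
  have hYP : ∀ i, Y i ⊆ P i := fun i => hXY i ▸ Set.subset_union_right
  have hcX : ∀ i, ∀ v ∈ X i, c v = i := fun i v hv => (hc' v i (hXP i hv)).symm
  have hcY : ∀ i, ∀ v ∈ Y i, c v = i := fun i v hv => (hc' v i (hYP i hv)).symm
  have hpos : ∀ i, 0 < (P i).ncard := fun i => by
    obtain ⟨u, -, hu, -⟩ := hEdge i
    exact (Set.ncard_pos).2 ⟨u, hu⟩
  have hlt : ∀ i, ∀ v ∈ P i, f i v < (P i).ncard := fun i v hv => by
    have := hBound i v hv
    have := hpos i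
    rw [Nat.card_coe_set_eq] at *
    omega
  have hfX : ∀ i, ∀ x ∈ X i, f i x < (X i).ncard := fun i x hx => by
    have := add_ncard_lt_of_forall_mem_Ioo ((hInj i).mono (hYP i)) (hlt i x (hXP i hx))
      fun y hy => ⟨hOrder i x hx y hy, hlt i y (hYP i hy)⟩
    have := hPn i
    omega
  have hfY : ∀ i, ∀ y ∈ Y i, (X i).ncard ≤ f i y := fun i y hy =>
    ncard_le_of_forall_lt ((hInj i).mono (hXP i)) fun x hx => hOrder i x hx y hy
  -- `X`-blocks are laid out in increasing order of index, followed by the `Y`-blocks in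
  -- decreasing order, so that the components are nested in each other.
  let A : Fin m → ℕ := fun i => ∑ j ∈ Finset.Iio i, (X j).ncard
  let C : Fin m → ℕ := fun i => ∑ j ∈ Finset.Ioi i, (X j).ncard
  let B : Fin m → ℕ := fun i => ∑ j ∈ Finset.Ioi i, (Y j).ncard
  have hA : ∀ i k, i < k → A i + (X i).ncard ≤ A k := fun i k h => sum_Iio_add_le_sum_Iio _ h
  have hC : ∀ i k, i < k → C k + (X k).ncard ≤ C i := fun i k h => sum_Ioi_add_le_sum_Ioi _ h
  have hB : ∀ i k, i < k → B k + (Y k).ncard ≤ B i := fun i k h => sum_Ioi_add_le_sum_Ioi _ h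
  obtain ⟨N, hN⟩ : ∃ N, ∑ j, (X j).ncard = N := ⟨_, rfl⟩
  have hAC : ∀ i, A i + (X i).ncard + C i = N := fun i => hN ▸ sum_Iio_add_add_sum_Ioi _ i
  have hBN : ∀ i, N + B i + (Y i).ncard ≤ Fintype.card V := fun i => by
    have h1 : ∑ j ∈ Finset.Iio i, (Y j).ncard + (Y i).ncard + B i = ∑ j, (Y j).ncard :=
      sum_Iio_add_add_sum_Ioi _ i
    simp_rw [hPn, Finset.sum_add_distrib] at hcard
    omega
  let g : V → ℕ := fun v =>
    if v ∈ X (c v) then A (c v) + f (c v) v else N + B (c v) + (f (c v) v - (X (c v)).ncard)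
  have hgX : ∀ i, ∀ x ∈ X i, g x = A i + f i x := fun i x hx => by
    obtain rfl := hcX i x hx
    exact if_pos hx
  have hgY : ∀ i, ∀ y ∈ Y i, g y + (X i).ncard = N + B i + f i y := fun i y hy => by
    obtain rfl := hcY i y hy
    have h : g y = N + B (c y) + (f (c y) y - (X (c y)).ncard) :=
      if_neg ((hDisj _).notMem_of_mem_right hy)
    have := hfY _ y hy
    omega
  have hcov : ∀ v, v ∈ X (c v) ∨ v ∈ Y (c v) := fun v => by
    have h : v ∈ P (c v) := hc v
    rwa [← hXY] at h
  have hgXN : ∀ i, ∀ x ∈ X i, g x < N := fun i x hx => by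
    have := hgX i x hx
    have := hfX i x hx
    have := hAC i
    omega
  have hgYN : ∀ i, ∀ y ∈ Y i, N ≤ g y ∧ g y < Fintype.card V := fun i y hy => by
    have := hgY i y hy
    have := hfY i y hy
    have := hlt i y (hYP i hy)
    have := hPn i
    have := hBN i
    omega
  have hgV : ∀ v, g v < Fintype.card V := fun v => by
    rcases hcov v with h | h
    · have := hgXN _ v h
      have := hBN (c v)
      omega
    · exact (hgYN _ v h).2
  have hginj : Function.Injective g := fun u v huv => by
    have heq : c u = c v → f (c u) u = f (c u) v → u = v := fun h1 h2 =>
      hInj (c u) (hc u) (h1 ▸ hc v) h2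
    rcases hcov u with hu | hu <;> rcases hcov v with hv | hv
    · have h1 := hgX _ u hu
      have h2 := hgX _ v hv
      have h3 := hfX _ u hu
      have h4 := hfX _ v hv
      rcases lt_trichotomy (c u) (c v) with h | h | h
      · have := hA _ _ h
        omega
      · refine heq h ?_
        rw [← h] at h2
        omega
      · have := hA _ _ h
        omega
    · have := hgXN _ u hu
      have := hgYN _ v hv
      omega
    · have := hgXN _ v hv
      have := hgYN _ u hu
      omega
    · have h1 := hgY _ u hu
      have h2 := hgY _ v hv
      have h3 := hfY _ u hu
      have h4 := hfY _ v hv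
      have h5 := hlt _ u (hc u)
      have h6 := hlt _ v (hc v)
      have h7 := hPn (c u)
      have h8 := hPn (c v)
      rcases lt_trichotomy (c u) (c v) with h | h | h
      · have := hB _ _ h
        omega
      · refine heq h ?_
        rw [← h] at h2
        omega
      · have := hB _ _ h
        omega
  have hdist : ∀ u v, G.Adj u v → Nat.dist (g u) (g v) =
      C (c u) + B (c u) + Nat.dist (f (c u) u) (f (c u) v) := fun u v huv => by
    have key : ∀ i, ∀ x ∈ X i, ∀ y ∈ Y i,
        Nat.dist (g x) (g y) = C i + B i + Nat.dist (f i x) (f i y) := fun i x hx y hy => by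
      have := hgX i x hx
      have := hgY i y hy
      have := hgXN i x hx
      have := hgYN i y hy
      have := hOrder i x hx y hy
      have := hAC i
      rw [Nat.dist_eq_sub_of_le (by omega), Nat.dist_eq_sub_of_le (by omega)]
      omega
    rcases hBip (c u) huv (hc u) (hNoCross huv _ (hc u)) with ⟨hu, hv⟩ | ⟨hu, hv⟩
    · exact key _ u hu v hv
    · rw [Nat.dist_comm, Nat.dist_comm (f (c u) u)]
      exact key _ v hv u hu
  have hmem : ∀ u v, G.Adj u v → 1 ≤ Nat.dist (f (c u) u) (f (c u) v) ∧
      Nat.dist (f (c u) u) (f (c u) v) < (X (c u)).ncard + (Y (c u)).ncard := fun u v huv => by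
    have h : Nat.dist (f (c u) u) (f (c u) v) ∈ Set.Icc 1 (Nat.card (P (c u)) - 1) := by
      rw [← hLabels]
      exact ⟨u, hc u, v, hNoCross huv _ (hc u), huv, rfl⟩
    rw [Nat.card_coe_set_eq, hPn] at h
    obtain ⟨h1, h2⟩ := h
    omega
  refine ⟨g, hginj, hgV, ?_, ?_, ?_⟩
  · rintro x y ⟨i, hx⟩ ⟨j, hy⟩
    exact (hgXN i x hx).trans_le (hgYN j y hy).1
  · intro u v u' v' h h' hne heq
    rw [hdist u v h, hdist u' v' h'] at heq
    have h1 := hmem u v h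
    have h2 := hmem u' v' h'
    rcases lt_trichotomy (c u) (c u') with hlt | he | hlt
    · have := hB _ _ hlt
      have := hC _ _ hlt
      omega
    · rw [← he] at heq
      have hu' : u' ∈ P (c u) := he ▸ hc u'
      have := (hTree (c u)).edge_eq_of_dist_eq (f := fun w => f (c u) w)
        (u := ⟨u, hc u⟩) (v := ⟨v, hNoCross h _ (hc u)⟩)
        (u' := ⟨u', hu'⟩) (v' := ⟨v', hNoCross h' _ hu'⟩)
        (fun k hk => by
          rw [← hLabels] at hk
          obtain ⟨a, ha, b, hb, hab, hk⟩ := hk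
          exact ⟨⟨a, ha⟩, ⟨b, hb⟩, hab, hk⟩)
        h h' (Nat.add_left_cancel heq)
      exact hne (congrArg (Sym2.map Subtype.val) this)
    · have := hB _ _ hlt
      have := hC _ _ hlt
      omega
  · intro u v h
    have h1 := hdist u v h
    have h2 := hmem u v h
    have h3 := hgV u
    have h4 := hgV v
    refine ⟨by omega, ?_⟩
    rw [Nat.dist] at *
    omega
end

section
/- Let G be a disconnected graph whose connected components H_1, …, H_m (m ≥ 2) are connected bipartite graphs, where H_i has q_i ≥ 1 edges and bipartition (X_i, Y_i), and admits a set-ordered graceful labeling f_i with max f_i(X_i) < min f_i(Y_i). Set q = q_1 + ⋯ + q_m. Then G admits a flawed set-ordered graceful labeling: there exists an injective map g : V(G) → {0, 1, …, q + m − 1} such that max g(X) < min g(Y), where X = X_1 ∪ … ∪ X_m and Y = Y_1 ∪ … ∪ Y_m, and the q induced edge labels g(uv) = |g(u) − g(v)|, over all edges uv of G, are pairwise distinct (hence form a q-element subset of {1, …, q + m − 1}). -/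
/-- In a finite linear order, the sum of a weight strictly below `i`, the weight at `i`, and the
sum strictly above `i` make up the total. -/
theorem sum_Iio_add_self_add_sum_Ioi {m : ℕ} (w : Fin m → ℕ) (i : Fin m) :
    ∑ k ∈ Finset.Iio i, w k + w i + ∑ k ∈ Finset.Ioi i, w k = ∑ k, w k := by
  have h1 : ∑ k ∈ Finset.Iio i, w k + w i = ∑ k ∈ Finset.Iic i, w k := by
    rw [← Finset.Iio_insert, Finset.sum_insert (by simp), add_comm]
  rw [h1, ← Finset.sum_union]
  · congr 1
    ext k
    simp [le_or_gt]
  · rw [Finset.disjoint_left]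
    intro k
    simp

theorem sum_Iio_add_self_le_sum_Iio {m : ℕ} (w : Fin m → ℕ) {i j : Fin m} (h : i < j) :
    ∑ k ∈ Finset.Iio i, w k + w i ≤ ∑ k ∈ Finset.Iio j, w k := by
  rw [add_comm, ← Finset.sum_insert (by simp), Finset.Iio_insert]
  exact Finset.sum_le_sum_of_subset fun k hk =>
    Finset.mem_Iio.2 ((Finset.mem_Iic.1 hk).trans_lt h)

theorem sum_Ioi_add_self_le_sum_Ioi {m : ℕ} (w : Fin m → ℕ) {i j : Fin m} (h : i < j) :
    ∑ k ∈ Finset.Ioi j, w k + w j ≤ ∑ k ∈ Finset.Ioi i, w k := by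
  have hi := sum_Iio_add_self_add_sum_Ioi w i
  have hj := sum_Iio_add_self_add_sum_Ioi w j
  have hij := sum_Iio_add_self_le_sum_Iio w h
  omega

/-- If the edge labels of the part of `G` induced on `P` fill `{1, …, q}`, where `q` is the number
of edges, then distinct edges have distinct labels. -/
theorem sym2_eq_of_dist_eq {V : Type} [Finite V] {G : SimpleGraph V} {P : Set V} {q : ℕ}
    {f : V → ℕ} (hq : q = Nat.card (G.induce P).edgeSet)
    (hLabels : {c : ℕ | ∃ u ∈ P, ∃ v ∈ P, G.Adj u v ∧ Nat.dist (f u) (f v) = c} = Set.Icc 1 q)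
    {u v u' v' : V} (hu : u ∈ P) (hv : v ∈ P) (hu' : u' ∈ P) (hv' : v' ∈ P)
    (h : G.Adj u v) (h' : G.Adj u' v') (heq : Nat.dist (f u) (f v) = Nat.dist (f u') (f v')) :
    s(u, v) = s(u', v') := by
  let label : Sym2 P → ℕ :=
    Sym2.lift ⟨fun a b => Nat.dist (f a) (f b), fun a b => Nat.dist_comm _ _⟩
  have himage : label '' (G.induce P).edgeSet = Set.Icc 1 q := by
    rw [← hLabels]
    ext c
    constructor
    · rintro ⟨e, he, rfl⟩
      induction e with
      | h a b => exact ⟨a, a.2, b, b.2, he, rfl⟩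
    · rintro ⟨a, ha, b, hb, hab, rfl⟩
      exact ⟨s(⟨a, ha⟩, ⟨b, hb⟩), hab, rfl⟩
  have hinj : Set.InjOn label (G.induce P).edgeSet := by
    refine Set.injOn_of_ncard_image_eq ?_ (Set.toFinite _)
    rw [himage, Set.ncard_eq_toFinset_card', ← Nat.card_coe_set_eq, ← hq]
    simp
  have hedge : s((⟨u, hu⟩ : P), (⟨v, hv⟩ : P)) = s(⟨u', hu'⟩, ⟨v', hv'⟩) :=
    hinj (show (G.induce P).Adj ⟨u, hu⟩ ⟨v, hv⟩ from h)
      (show (G.induce P).Adj ⟨u', hu'⟩ ⟨v', hv'⟩ from h') heq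
  simpa using congrArg (Sym2.map Subtype.val) hedge

/-- A disconnected graph whose components are connected bipartite graphs
that all admit set-ordered graceful labelings admits a flawed set-ordered graceful labeling. -/
theorem disconnected_flawed_set_ordered_graceful_labeling
    {V : Type} [Fintype V] [DecidableEq V]
    (G : SimpleGraph V) (m : ℕ) (hm : 2 ≤ m)
    (P X Y : Fin m → Set V) (q : Fin m → ℕ) (f : Fin m → V → ℕ)
    -- the `P i` partition the vertex set, and there is no edge between different parts,
    -- so the `P i` are the vertex sets of the connected components `H_i`
    (hPart : ∀ v : V, ∃! i : Fin m, v ∈ P i)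
    (hNoCross : ∀ ⦃u v : V⦄, G.Adj u v → ∀ i : Fin m, u ∈ P i → v ∈ P i)
    -- each component is connected and has `q i ≥ 1` edges
    (hConn : ∀ i : Fin m, (G.induce (P i)).Connected)
    (hq : ∀ i : Fin m, q i = Nat.card (G.induce (P i)).edgeSet)
    (hq1 : ∀ i : Fin m, 1 ≤ q i)
    -- `(X i, Y i)` is a vertex bipartition of the component `H_i`
    (hXY : ∀ i : Fin m, X i ∪ Y i = P i)
    (hDisj : ∀ i : Fin m, Disjoint (X i) (Y i))
    (hBip : ∀ i : Fin m, ∀ ⦃u v : V⦄, G.Adj u v → u ∈ P i → v ∈ P i →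
      (u ∈ X i ∧ v ∈ Y i) ∨ (u ∈ Y i ∧ v ∈ X i))
    -- `f i` is a set-ordered graceful labeling of the component `H_i`
    (hInj : ∀ i : Fin m, Set.InjOn (f i) (P i))
    (hBound : ∀ i : Fin m, ∀ v ∈ P i, f i v ≤ q i)
    (hOrder : ∀ i : Fin m, ∀ x ∈ X i, ∀ y ∈ Y i, f i x < f i y)
    (hLabels : ∀ i : Fin m,
      {c : ℕ | ∃ u ∈ P i, ∃ v ∈ P i, G.Adj u v ∧ Nat.dist (f i u) (f i v) = c}
        = Set.Icc 1 (q i)) :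
    -- conclusion: a flawed set-ordered graceful labeling of `G`, with colors in
    -- `{0, …, q + m - 1}` where `q = q 1 + ⋯ + q m`
    ∃ g : V → ℕ,
      Function.Injective g ∧
      (∀ v : V, g v < (∑ i : Fin m, q i) + m) ∧
      (∀ x y : V, (∃ i : Fin m, x ∈ X i) → (∃ i : Fin m, y ∈ Y i) → g x < g y) ∧
      (∀ ⦃u v u' v' : V⦄, G.Adj u v → G.Adj u' v' → s(u, v) ≠ s(u', v') →
        Nat.dist (g u) (g v) ≠ Nat.dist (g u') (g v')) ∧
      (∀ ⦃u v : V⦄, G.Adj u v →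
        1 ≤ Nat.dist (g u) (g v) ∧ Nat.dist (g u) (g v) ≤ (∑ i : Fin m, q i) + m - 1) := by
  classical
  have hXP : ∀ i, ∀ v ∈ X i, v ∈ P i := fun i v hv => hXY i ▸ Or.inl hv
  have hYP : ∀ i, ∀ v ∈ Y i, v ∈ P i := fun i v hv => hXY i ▸ Or.inr hv
  -- `a i` is the largest label of `X i`, located by means of the edge labeled `1`
  have hsep : ∀ i, ∃ a, a ≤ q i ∧ (∀ x ∈ X i, f i x ≤ a) ∧ ∀ y ∈ Y i, a < f i y := by
    intro i
    have h1 : 1 ∈ Set.Icc 1 (q i) := ⟨le_rfl, hq1 i⟩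
    rw [← hLabels i] at h1
    obtain ⟨u, hu, v, hv, huv, hd⟩ := h1
    have key : ∀ x ∈ X i, ∀ y ∈ Y i, Nat.dist (f i x) (f i y) = 1 →
        ∃ a, a ≤ q i ∧ (∀ x ∈ X i, f i x ≤ a) ∧ ∀ y ∈ Y i, a < f i y := by
      intro x hx y hy hxy
      have hlt := hOrder i x hx y hy
      rw [Nat.dist_eq_sub_of_le hlt.le] at hxy
      refine ⟨f i x, hBound i x (hXP i x hx), fun x' hx' => ?_, fun y' hy' => hOrder i x hx y' hy'⟩
      have := hOrder i x' hx' y hy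
      omega
    rcases hBip i huv hu hv with ⟨hx, hy⟩ | ⟨hy, hx⟩
    · exact key u hx v hy hd
    · exact key v hx u hy (by rwa [Nat.dist_comm])
  choose a haq haX haY using hsep
  choose c hc hcu using hPart
  -- blocks of `X`-labels in increasing order, followed by blocks of `Y`-labels in decreasing order
  let A : Fin m → ℕ := fun i => ∑ k ∈ Finset.Iio i, (a k + 1)
  let T : Fin m → ℕ := fun i => ∑ k ∈ Finset.Ioi i, (a k + 1)
  let E : Fin m → ℕ := fun i => ∑ k ∈ Finset.Ioi i, (q k - a k)
  have hS : ∀ i, A i + (a i + 1) + T i = ∑ k, (a k + 1) :=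
    fun i => sum_Iio_add_self_add_sum_Ioi _ i
  have hA : ∀ i j, i < j → A i + (a i + 1) ≤ A j := fun i j h => sum_Iio_add_self_le_sum_Iio _ h
  have hT : ∀ i j, i < j → T j + (a j + 1) ≤ T i := fun i j h => sum_Ioi_add_self_le_sum_Ioi _ h
  have hE : ∀ i j, i < j → E j + (q j - a j) ≤ E i := fun i j h => sum_Ioi_add_self_le_sum_Ioi _ h
  have hEtot : ∀ i, E i + (q i - a i) ≤ ∑ k, (q k - a k) := by
    intro i
    have : _ + _ + E i = _ := sum_Iio_add_self_add_sum_Ioi (fun k => q k - a k) i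
    omega
  have htot : ∑ k, (a k + 1) + ∑ k, (q k - a k) = ∑ k, q k + m := by
    rw [← Finset.sum_add_distrib]
    have : ∀ k, a k + 1 + (q k - a k) = q k + 1 := fun k => by have := haq k; omega
    simp [this, Finset.sum_add_distrib]
  clear_value A T E
  let g : V → ℕ := fun v =>
    if v ∈ X (c v) then f (c v) v + A (c v) else f (c v) v + A (c v) + T (c v) + E (c v)
  have hgX : ∀ i, ∀ v ∈ X i, g v = f i v + A i := by
    intro i v hv
    obtain rfl := hcu v i (hXP i v hv)
    simp [g, hv]
  have hgY : ∀ i, ∀ v ∈ Y i, g v = f i v + A i + T i + E i := by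
    intro i v hv
    obtain rfl := hcu v i (hYP i v hv)
    simp [g, Set.disjoint_right.1 (hDisj _) hv]
  clear_value g
  have hside : ∀ v, (v ∈ X (c v)) ∨ (v ∈ Y (c v)) := fun v => by
    have : v ∈ P (c v) := hc v
    rwa [← hXY] at this
  have hlt : ∀ x y : V, (∃ i, x ∈ X i) → (∃ i, y ∈ Y i) → g x < g y := by
    rintro x y ⟨i, hx⟩ ⟨j, hy⟩
    rw [hgX i x hx, hgY j y hy]
    have := haX i x hx
    have := haY j y hy
    have := hS i
    have := hS j
    omega
  have hbound : ∀ v, g v < ∑ i, q i + m := by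
    intro v
    have := hS (c v)
    have := hEtot (c v)
    have := haq (c v)
    have := hBound _ v (hc v)
    rcases hside v with h | h
    · rw [hgX _ v h]
      have := haX _ v h
      omega
    · rw [hgY _ v h]
      omega
  -- an edge label inside the `i`-th part is shifted by `T i + E i`
  have hdist : ∀ ⦃u v : V⦄, G.Adj u v → u ∈ P (c u) ∧ v ∈ P (c u) ∧
      Nat.dist (g u) (g v) = Nat.dist (f (c u) u) (f (c u) v) + (T (c u) + E (c u)) := by
    intro u v huv
    have hv := hNoCross huv _ (hc u)
    refine ⟨hc u, hv, ?_⟩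
    have key : ∀ i, ∀ x ∈ X i, ∀ y ∈ Y i,
        Nat.dist (g x) (g y) = Nat.dist (f i x) (f i y) + (T i + E i) := by
      intro i x hx y hy
      have h1 := hOrder i x hx y hy
      rw [Nat.dist_eq_sub_of_le h1.le, Nat.dist_eq_sub_of_le (hlt x y ⟨i, hx⟩ ⟨i, hy⟩).le,
        hgX i x hx, hgY i y hy]
      omega
    rcases hBip _ huv (hc u) hv with ⟨hx, hy⟩ | ⟨hy, hx⟩
    · exact key _ u hx v hy
    · rw [Nat.dist_comm, key _ v hx u hy, Nat.dist_comm]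
  have hrange : ∀ ⦃u v : V⦄, G.Adj u v → 1 ≤ Nat.dist (f (c u) u) (f (c u) v) ∧
      Nat.dist (f (c u) u) (f (c u) v) ≤ q (c u) := by
    intro u v huv
    have : Nat.dist (f (c u) u) (f (c u) v) ∈ Set.Icc 1 (q (c u)) := by
      rw [← hLabels]
      exact ⟨u, (hdist huv).1, v, (hdist huv).2.1, huv, rfl⟩
    exact this
  refine ⟨g, ?_, hbound, hlt, ?_, ?_⟩
  · have hne : ∀ u v, c u < c v → g u ≠ g v := by
      intro u v huv
      rcases hside u with hu | hu <;> rcases hside v with hv | hv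
      · rw [hgX _ u hu, hgX _ v hv]
        have := haX _ u hu
        have := hA _ _ huv
        omega
      · exact (hlt u v ⟨_, hu⟩ ⟨_, hv⟩).ne
      · exact (hlt v u ⟨_, hv⟩ ⟨_, hu⟩).ne'
      · rw [hgY _ u hu, hgY _ v hv]
        have := haY _ u hu
        have := hBound _ v (hc v)
        have := haq (c v)
        have := hE _ _ huv
        have := hS (c u)
        have := hS (c v)
        omega
    intro u v huv
    rcases lt_trichotomy (c u) (c v) with h | h | h
    · exact absurd huv (hne u v h)
    · have hu := hside u
      have hv := hside v
      rw [← h] at hv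
      rcases hu with hu | hu <;> rcases hv with hv | hv
      · rw [hgX _ u hu, hgX _ v hv] at huv
        exact hInj _ (hXP _ u hu) (hXP _ v hv) (by omega)
      · exact absurd huv (hlt u v ⟨_, hu⟩ ⟨_, hv⟩).ne
      · exact absurd huv (hlt v u ⟨_, hv⟩ ⟨_, hu⟩).ne'
      · rw [hgY _ u hu, hgY _ v hv] at huv
        exact hInj _ (hYP _ u hu) (hYP _ v hv) (by omega)
    · exact absurd huv.symm (hne v u h)
  · intro u v u' v' h h' hne heq
    obtain ⟨hu, hv, hd⟩ := hdist h
    obtain ⟨hu', hv', hd'⟩ := hdist h'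
    have hr := hrange h
    have hr' := hrange h'
    rw [hd, hd'] at heq
    have := haq (c u)
    have := haq (c u')
    rcases lt_trichotomy (c u) (c u') with hlt | hcc | hlt
    · have := hT _ _ hlt
      have := hE _ _ hlt
      omega
    · rw [← hcc] at hu' hv' heq
      exact hne (sym2_eq_of_dist_eq (hq _) (hLabels _) hu hv hu' hv' h h' (by omega))
    · have := hT _ _ hlt
      have := hE _ _ hlt
      omega
  · intro u v huv
    have h1 := (hdist huv).2.2
    have h2 := hrange huv
    have hu := hbound u
    have hv := hbound v
    refine ⟨by omega, ?_⟩
    simp only [Nat.dist]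
    omega
end

section
/- Let k ≥ 1 and d ≥ 1 be integers and let G be a connected bipartite graph with q ≥ 1 edges admitting a graceful (k,d)-total coloring. Let G′ be any graph obtained from G by attaching finitely many new pendant vertices, each new vertex being joined by exactly one new edge to some vertex of G (different new vertices may be attached to the same or to different vertices of G, and the attachment is arbitrary). Then G′ is again a connected bipartite graph and admits a graceful (k,d)-total coloring. -/
/-- `G'` arises from `G` by attaching, for each `l : L`, a pendant vertex joined to `a l`. -/
structure IsLeafExtension {V L : Type} (G : SimpleGraph V) (a : L → V)
    (G' : SimpleGraph (V ⊕ L)) : Prop where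
  adj_inl_inl : ∀ u v, G'.Adj (Sum.inl u) (Sum.inl v) ↔ G.Adj u v
  adj_inl_inr : ∀ u l, G'.Adj (Sum.inl u) (Sum.inr l) ↔ a l = u
  not_adj_inr_inr : ∀ l m, ¬ G'.Adj (Sum.inr l) (Sum.inr m)

namespace IsLeafExtension

variable {V L : Type} {G : SimpleGraph V} {a : L → V} {G' : SimpleGraph (V ⊕ L)}

theorem adj_leaf (h : IsLeafExtension G a G') (l : L) :
    G'.Adj (Sum.inl (a l)) (Sum.inr l) :=
  (h.adj_inl_inr _ _).2 rfl

/-- A symmetric relation holds on all edges of `G'` as soon as it holds on the edges of `G`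
and on the pendant edges. -/
theorem forall_adj (h : IsLeafExtension G a G') {P : V ⊕ L → V ⊕ L → Prop}
    (symm : ∀ x y, P x y → P y x)
    (old : ∀ u v, G.Adj u v → P (Sum.inl u) (Sum.inl v))
    (leaf : ∀ l, P (Sum.inl (a l)) (Sum.inr l)) ⦃x y : V ⊕ L⦄ (hxy : G'.Adj x y) : P x y := by
  rcases x with u | l <;> rcases y with v | m
  · exact old u v ((h.adj_inl_inl u v).1 hxy)
  · obtain rfl := (h.adj_inl_inr u m).1 hxy
    exact leaf m
  · obtain rfl := (h.adj_inl_inr v l).1 hxy.symm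
    exact symm _ _ (leaf l)
  · exact (h.not_adj_inr_inr l m hxy).elim

theorem connected (h : IsLeafExtension G a G') (hG : G.Connected) : G'.Connected := by
  let φ : G →g G' := ⟨Sum.inl, fun {u v} huv => (h.adj_inl_inl u v).2 huv⟩
  obtain ⟨v₀⟩ := hG.nonempty
  have inl_reach (v : V) : G'.Reachable (Sum.inl v₀) (Sum.inl v) := (hG.preconnected v₀ v).map φ
  refine G'.connected_iff_exists_forall_reachable.2 ⟨Sum.inl v₀, ?_⟩
  rintro (v | l)
  · exact inl_reach v
  · exact (inl_reach (a l)).trans (h.adj_leaf l).reachable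

theorem edgeSet_eq (h : IsLeafExtension G a G') :
    G'.edgeSet = Sym2.map Sum.inl '' G.edgeSet ∪
      Set.range (fun l => s(Sum.inl (a l), Sum.inr l)) := by
  apply Set.Subset.antisymm
  · intro e he
    induction e with
    | _ x y =>
      refine h.forall_adj (P := fun x y => s(x, y) ∈ Sym2.map Sum.inl '' G.edgeSet ∪
        Set.range (fun l => s(Sum.inl (a l), Sum.inr l))) ?_ ?_ ?_ he
      · intro x y hxy
        rwa [Sym2.eq_swap]
      · exact fun u v huv => Or.inl ⟨s(u, v), huv, rfl⟩
      · exact fun l => Or.inr ⟨l, rfl⟩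
  · rintro e (⟨e, he, rfl⟩ | ⟨l, rfl⟩)
    · induction e with
      | _ u v => exact (h.adj_inl_inl u v).2 he
    · exact h.adj_leaf l

theorem card_edgeSet [Finite V] [Finite L] (h : IsLeafExtension G a G') :
    Nat.card G'.edgeSet = Nat.card G.edgeSet + Nat.card L := by
  have hdisj : Disjoint (Sym2.map Sum.inl '' G.edgeSet)
      (Set.range (fun l => s(Sum.inl (a l), Sum.inr l))) := by
    rw [Set.disjoint_left]
    rintro _ ⟨e, -, rfl⟩ ⟨l, hl⟩
    induction e with
    | _ u v => simp at hl
  have hinj : Function.Injective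
      (fun l => (s(Sum.inl (a l), Sum.inr l) : Sym2 (V ⊕ L))) := by
    intro l m hlm
    simp at hlm
    exact hlm.2
  rw [Nat.card_coe_set_eq, h.edgeSet_eq, Set.ncard_union_eq hdisj (Set.toFinite _) (Set.toFinite _),
    Set.ncard_image_of_injective _ (Sym2.map.injective Sum.inl_injective), Nat.card_coe_set_eq,
    ← Set.image_univ, Set.ncard_image_of_injective _ hinj, Set.ncard_univ]

theorem edgeColorSet_eq (h : IsLeafExtension G a G') (f : Sym2 (V ⊕ L) → ℕ) :
    EdgeColorSet G' f = EdgeColorSet G (fun e => f (e.map Sum.inl)) ∪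
      Set.range (fun l => f s(Sum.inl (a l), Sum.inr l)) := by
  ext c
  constructor
  · rintro ⟨x, y, hxy, rfl⟩
    refine h.forall_adj (P := fun x y => f s(x, y) ∈ EdgeColorSet G (fun e => f (e.map Sum.inl)) ∪
      Set.range (fun l => f s(Sum.inl (a l), Sum.inr l))) ?_ ?_ ?_ hxy
    · intro x y hxy
      rwa [Sym2.eq_swap]
    · exact fun u v huv => Or.inl ⟨u, v, huv, rfl⟩
    · exact fun l => Or.inr ⟨l, rfl⟩
  · rintro (⟨u, v, huv, rfl⟩ | ⟨l, rfl⟩)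
    · exact ⟨_, _, (h.adj_inl_inl u v).2 huv, rfl⟩
    · exact ⟨_, _, h.adj_leaf l, rfl⟩

/-- A leaf goes to the side opposite to its neighbour. -/
theorem isBipartitionOf (h : IsLeafExtension G a G') {X Y : Set V}
    (hXY : IsBipartitionOf G X Y) :
    IsBipartitionOf G' (Sum.elim X (a ⁻¹' Y)) (Sum.elim Y (a ⁻¹' X)) := by
  obtain ⟨hcover, hdisj, hadj⟩ := hXY
  rw [Set.disjoint_left] at hdisj
  refine ⟨?_, Set.disjoint_left.2 ?_, h.forall_adj ?_ hadj ?_⟩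
  · rintro (v | l)
    · exact hcover v
    · exact (hcover (a l)).symm
  · rintro (v | l) hX hY
    · exact hdisj hX hY
    · exact hdisj hY hX
  · exact fun x y hxy => hxy.symm.imp And.symm And.symm
  · exact fun l => (hcover (a l)).imp (fun hX => ⟨hX, hX⟩) (fun hY => ⟨hY, hY⟩)

end IsLeafExtension

theorem ArithProgSet_add (k d q n : ℕ) :
    ArithProgSet k d (q + n) =
      ArithProgSet k d q ∪ Set.range (fun i : Fin n => k + (q + i) * d) := by
  ext c
  constructor
  · rintro ⟨j, hj, rfl⟩
    by_cases hjq : j < q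
    · exact Or.inl ⟨j, hjq, rfl⟩
    · refine Or.inr ⟨⟨j - q, by omega⟩, ?_⟩
      simp [Nat.add_sub_cancel' (not_lt.1 hjq)]
  · rintro (⟨j, hj, rfl⟩ | ⟨i, rfl⟩)
    · exact ⟨j, by omega, rfl⟩
    · exact ⟨q + i, by omega, rfl⟩

/-- A graceful `(k,d)`-total coloring extends to the leaves: the pendant edges receive the colors
`k + jd` for `q ≤ j < q + |L|`, after shifting all vertex colors by `(q + |L|)d` to make room
below the colors of `Y`. -/
theorem IsLeafExtension.exists_gracefulKDTotalColoring {V L : Type} [Finite V] [Finite L]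
    {G : SimpleGraph V} {a : L → V} {G' : SimpleGraph (V ⊕ L)} (h : IsLeafExtension G a G')
    {X Y : Set V} (hXY : IsBipartitionOf G X Y) {k d : ℕ} {fV : V → ℕ} {fE : Sym2 V → ℕ}
    (hf : GracefulKDTotalColoring G X Y k d (Nat.card G.edgeSet) fV fE) :
    ∃ (fV' : V ⊕ L → ℕ) (fE' : Sym2 (V ⊕ L) → ℕ),
      GracefulKDTotalColoring G' (Sum.elim X (a ⁻¹' Y)) (Sum.elim Y (a ⁻¹' X)) k d
        (Nat.card G'.edgeSet) fV' fE' := by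
  classical
  obtain ⟨⟨hX, hY, hE⟩, hdist, hcolors⟩ := hf
  obtain ⟨hcover, hdisj, -⟩ := hXY
  rw [Set.disjoint_left] at hdisj
  rw [h.card_edgeSet]
  set q := Nat.card G.edgeSet
  set n := Nat.card L
  let e : L ≃ Fin n := Finite.equivFin L
  let leafColor (l : L) : ℕ :=
    if a l ∈ X then fV (a l) + (q + n) * d + (k + (q + e l) * d)
    else fV (a l) + (q + n) * d - (k + (q + e l) * d)
  let fV' : V ⊕ L → ℕ := Sum.elim (fun v => fV v + (q + n) * d) leafColor
  let fE' : Sym2 (V ⊕ L) → ℕ :=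
    Sym2.lift ⟨fun x y => Nat.dist (fV' x) (fV' y), fun x y => Nat.dist_comm _ _⟩
  have old_color (u v : V) (huv : G.Adj u v) : fE' s(Sum.inl u, Sum.inl v) = fE s(u, v) :=
    (Nat.dist_add_add_right _ _ _).trans (hdist huv).symm
  have mul_split (l : L) : (q + n) * d = (q + e l) * d + (n - e l) * d := by
    rw [← Nat.add_mul]
    congr 1
    have := (e l).isLt
    omega
  have leaf_color (l : L) : fE' s(Sum.inl (a l), Sum.inr l) = k + (q + e l) * d := by
    change Nat.dist (fV (a l) + (q + n) * d) (leafColor l) = _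
    by_cases hl : a l ∈ X
    · simp only [leafColor, if_pos hl, Nat.dist]
      omega
    · obtain ⟨j, hj⟩ := hY _ ((hcover _).resolve_left hl)
      have := mul_split l
      simp only [leafColor, if_neg hl, Nat.dist]
      omega
  refine ⟨fV', fE', ⟨?_, ?_, ?_⟩, fun _ _ _ => rfl, ?_⟩
  · rintro (v | l) hx
    · exact dvd_add (hX v hx) (dvd_mul_left _ _)
    · have hl : a l ∉ X := fun hl => hdisj hl hx
      obtain ⟨j, hj⟩ := hY _ hx
      refine ⟨j + (n - e l), ?_⟩
      have := mul_split l
      have : d * (j + (n - e l)) = j * d + (n - e l) * d := by ring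
      simp only [fV', Sum.elim_inr, leafColor, if_neg hl]
      omega
  · rintro (v | l) hy
    · obtain ⟨j, hj⟩ := hY v hy
      refine ⟨j + (q + n), ?_⟩
      simp only [fV', Sum.elim_inl, hj]
      ring
    · obtain ⟨i, hi⟩ := hX _ hy
      have hl : a l ∈ X := hy
      refine ⟨i + (q + n) + (q + e l), ?_⟩
      simp only [fV', Sum.elim_inr, leafColor, if_pos hl, hi]
      ring
  · refine h.forall_adj ?_ ?_ ?_
    · intro x y hxy
      rwa [Sym2.eq_swap]
    · intro u v huv
      rw [old_color u v huv]
      exact hE huv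
    · exact fun l => ⟨_, leaf_color l⟩
  · have hold : EdgeColorSet G (fun e => fE' (e.map Sum.inl)) = EdgeColorSet G fE := by
      ext c
      refine exists_congr fun u => exists_congr fun v => and_congr_right fun huv => ?_
      rw [← old_color u v huv, ← Sym2.map_mk]
    rw [h.edgeColorSet_eq, hold, hcolors, ArithProgSet_add]
    congr 1
    simp only [leaf_color]
    exact e.surjective.range_comp (fun i : Fin n => k + (q + i) * d)

/-- Attaching finitely many pendant vertices (leaves) to a connected
bipartite graph admitting a graceful `(k,d)`-total coloring yields a connected bipartite
graph admitting a graceful `(k,d)`-total coloring. -/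
theorem addLeaves_graceful_kd_total_coloring
    {V L : Type} [Fintype V] [DecidableEq V] [Fintype L] [DecidableEq L]
    (G : SimpleGraph V) (X Y : Set V) (k d : ℕ) (hk : 1 ≤ k) (hd : 1 ≤ d)
    (hconn : G.Connected) (hbip : IsBipartitionOf G X Y)
    (hq : 1 ≤ Nat.card G.edgeSet)
    (fV : V → ℕ) (fE : Sym2 V → ℕ)
    (hf : GracefulKDTotalColoring G X Y k d (Nat.card G.edgeSet) fV fE)
    -- `G'` is obtained from `G` by attaching, for each `l : L`, a new pendant vertex
    -- joined by one new edge to the vertex `a l` of `G`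
    (a : L → V) (G' : SimpleGraph (V ⊕ L))
    (hG' : ∀ x y : V ⊕ L, G'.Adj x y ↔
      ((∃ u v : V, x = Sum.inl u ∧ y = Sum.inl v ∧ G.Adj u v) ∨
       (∃ (u : V) (l : L), x = Sum.inl u ∧ y = Sum.inr l ∧ a l = u) ∨
       (∃ (u : V) (l : L), x = Sum.inr l ∧ y = Sum.inl u ∧ a l = u))) :
    G'.Connected ∧
      ∃ (X' Y' : Set (V ⊕ L)) (fV' : V ⊕ L → ℕ) (fE' : Sym2 (V ⊕ L) → ℕ),
        IsBipartitionOf G' X' Y' ∧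
        GracefulKDTotalColoring G' X' Y' k d (Nat.card G'.edgeSet) fV' fE' := by
  have h : IsLeafExtension G a G' :=
    { adj_inl_inl := fun u v => by simp [hG']
      adj_inl_inr := fun u l => by simp [hG', eq_comm]
      not_adj_inr_inr := fun l m => by simp [hG'] }
  obtain ⟨fV', fE', hf'⟩ := h.exists_gracefulKDTotalColoring hbip hf
  exact ⟨h.connected hconn, _, _, fV', fE', h.isBipartitionOf hbip, hf'⟩
end

section
/- Let k ≥ 0 and d ≥ 1 be integers. Every tree T with at least one edge admits a harmonious (k,d)-total coloring. -/
/-- In a tree, prescribed sums along the edges are realised by a vertex labeling. -/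
theorem SimpleGraph.IsTree.exists_add_eq {V A : Type} [AddCommGroup A] {T : SimpleGraph V}
    (hT : T.IsTree) (l : Sym2 V → A) :
    ∃ g : V → A, ∀ ⦃u v : V⦄, T.Adj u v → g u + g v = l s(u, v) := by
  classical
  obtain ⟨r⟩ := hT.connected.nonempty
  let altSum : ∀ {u v : V}, T.Walk u v → A := fun w =>
    SimpleGraph.Walk.rec (motive := fun _ _ _ => A) 0 (fun {u v _} _ _ s => l s(u, v) - s) w
  choose p hp huniq using fun v => hT.existsUnique_path v r
  refine ⟨fun v => altSum (p v), fun u v h => ?_⟩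
  by_cases hu : u ∈ (p v).support
  · have hv : v ∉ (p u).support := by
      intro hv
      have h1 : (p v).dropUntil u hu = p u := huniq u _ ((hp v).dropUntil hu)
      have h2 : (p u).dropUntil v hv = p v := huniq v _ ((hp u).dropUntil hv)
      have l1 := congrArg SimpleGraph.Walk.length ((p v).take_spec hu)
      have l2 := congrArg SimpleGraph.Walk.length ((p u).take_spec hv)
      rw [SimpleGraph.Walk.length_append, h1] at l1
      rw [SimpleGraph.Walk.length_append, h2] at l2
      exact h.ne (SimpleGraph.Walk.eq_of_length_eq_zero (p := (p v).takeUntil u hu) (by omega)).symm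
    have e : SimpleGraph.Walk.cons h.symm (p u) = p v := huniq v _ ((hp u).cons hv)
    change altSum (p u) + altSum (p v) = _
    rw [← e, Sym2.eq_swap]
    change altSum (p u) + (l s(v, u) - altSum (p u)) = _
    abel
  · have e : SimpleGraph.Walk.cons h (p v) = p u := huniq u _ ((hp v).cons hu)
    change altSum (p u) + altSum (p v) = _
    rw [← e]
    change l s(u, v) - altSum (p v) + altSum (p v) = _
    abel

/-- Every tree with at least one edge admits a harmonious
`(k,d)`-total coloring (for any `k ≥ 0`, `d ≥ 1`). -/
theorem tree_harmonious_kd_total_coloring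
    {V : Type} [Fintype V] [DecidableEq V]
    (T : SimpleGraph V) (hT : T.IsTree)
    (hq : 1 ≤ Nat.card T.edgeSet)
    (k d : ℕ) (hd : 1 ≤ d) :
    ∃ (X Y : Set V) (fV : V → ℕ) (fE : Sym2 V → ℕ),
      IsBipartitionOf T X Y ∧
      HarmoniousKDTotalColoring T X Y k d (Nat.card T.edgeSet) fV fE := by
  classical
  have φ : T.edgeSet ≃ Fin (Nat.card T.edgeSet) := Finite.equivFin T.edgeSet
  generalize Nat.card T.edgeSet = q at hq φ
  have : NeZero q := ⟨by omega⟩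
  let l : Sym2 V → ℕ := fun e => if h : e ∈ T.edgeSet then (φ ⟨e, h⟩ : ℕ) else 0
  have hl : ∀ e (h : e ∈ T.edgeSet), l e = φ ⟨e, h⟩ := fun e h => dif_pos h
  obtain ⟨g, hg⟩ := hT.exists_add_eq fun e => (l e : ZMod q)
  obtain ⟨c, hc⟩ := hT.exists_add_eq fun _ => (1 : ZMod 2)
  have hc' : ∀ ⦃u v : V⦄, T.Adj u v → c u = 0 ∧ c v ≠ 0 ∨ c u ≠ 0 ∧ c v = 0 := by
    intro u v h
    have key : ∀ a b : ZMod 2, a + b = 1 → a = 0 ∧ b ≠ 0 ∨ a ≠ 0 ∧ b = 0 := by decide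
    exact key _ _ (hc h)
  have hsum : ∀ ⦃u v : V⦄, T.Adj u v →
      (l s(u, v) * d : ℤ) ≡ ((g u).val + (g v).val) * d [ZMOD ((q * d : ℕ) : ℤ)] := by
    intro u v h
    push_cast
    refine Int.ModEq.mul_right' ?_
    rw [← ZMod.intCast_eq_intCast_iff]
    push_cast
    rw [ZMod.natCast_zmod_val, ZMod.natCast_zmod_val, hg h]
  refine ⟨{v | c v = 0}, {v | c v ≠ 0},
    fun v => if c v = 0 then (g v).val * d else k + (g v).val * d, fun e => k + l e * d,
    ⟨fun v => em _, Set.disjoint_left.2 fun v h h' => h' h, hc'⟩,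
    ⟨fun x hx => ?_, fun y hy => ⟨(g y).val, if_neg hy⟩, fun u v _ => ⟨_, rfl⟩⟩,
    fun u v h => ?_, ?_⟩
  · exact (dvd_mul_left d (g x).val).trans (if_pos hx).symm.dvd
  · have hs := hsum h
    rcases hc' h with ⟨hu, hv⟩ | ⟨hu, hv⟩
    all_goals
      simp only [hu, hv, if_true, if_false]
      push_cast at hs ⊢
      convert hs using 1 <;> ring
  · ext x
    constructor
    · rintro ⟨u, v, h, rfl⟩
      exact ⟨_, (hl _ h).trans_lt (φ ⟨s(u, v), h⟩).isLt, rfl⟩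
    · rintro ⟨j, hj, rfl⟩
      obtain ⟨⟨e, he⟩, hφ⟩ := φ.surjective ⟨j, hj⟩
      induction e using Sym2.ind with
      | _ u v =>
        refine ⟨u, v, he, ?_⟩
        simp only [hl _ he, hφ]
end

section
/- Let k ≥ 1 and d ≥ 1 be integers. Every tree T with at least one edge admits a graceful-difference (k,d)-total coloring, and also admits an odd-edge graceful-difference (k,d)-total coloring. -/
/-- The alternating sum of the edge weights `w` along a walk, starting with a plus sign. -/
def SimpleGraph.Walk.altSum {V : Type} {G : SimpleGraph V} (w : Sym2 V → ℤ) :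
    ∀ {u v : V}, G.Walk u v → ℤ
  | _, _, .nil => 0
  | u, _, .cons (v := v) _ p => w s(u, v) - p.altSum w

/-- Any edge weighting of a tree is given by sums of vertex weights, and the tree has a proper
two-coloring. -/
theorem SimpleGraph.IsTree.exists_sum_eq_weight {V : Type} {T : SimpleGraph V} (hT : T.IsTree)
    (w : Sym2 V → ℤ) :
    ∃ (s : V → ℤ) (P : V → Prop), ∀ ⦃u v : V⦄, T.Adj u v →
      s u + s v = w s(u, v) ∧ (P u ↔ ¬ P v) := by
  classical
  obtain ⟨r⟩ := hT.connected.nonempty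
  choose p hp hu using fun v => hT.existsUnique_path v r
  have key : ∀ u v, T.Adj u v → u ∉ (p v).support →
      (p u).altSum w + (p v).altSum w = w s(u, v) ∧
        (Even (p u).length ↔ ¬ Even (p v).length) := by
    intro u v h hmem
    rw [← hu u (.cons h (p v)) ((hp v).cons hmem)]
    simp [SimpleGraph.Walk.altSum, Nat.even_add_one]
  refine ⟨fun v => (p v).altSum w, fun v => Even (p v).length, fun u v h => ?_⟩
  by_cases hmem : u ∈ (p v).support
  · have hmem' : v ∉ (p u).support := by
      intro hv
      have e1 := hu u ((p v).dropUntil u hmem) ((hp v).dropUntil hmem)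
      have e2 := hu v ((p u).dropUntil v hv) ((hp u).dropUntil hv)
      have l1 := congrArg SimpleGraph.Walk.length ((p v).take_spec hmem)
      have l2 := congrArg SimpleGraph.Walk.length ((p u).take_spec hv)
      rw [SimpleGraph.Walk.length_append, e1] at l1
      rw [SimpleGraph.Walk.length_append, e2] at l2
      have : ((p v).takeUntil u hmem).length = 0 := by omega
      exact h.ne' (SimpleGraph.Walk.eq_of_length_eq_zero this)
    obtain ⟨h1, h2⟩ := key v u h.symm hmem'
    exact ⟨by rw [add_comm, h1, Sym2.eq_swap], by tauto⟩
  · exact key u v h hmem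

/-- For every natural edge weighting `w` of a finite tree there are vertex colors, multiples of `d`
on one part and congruent to `k` on the other, whose differences along edges are `k + w d`. -/
theorem exists_vertexColoring_dist_eq {V : Type} [Finite V] {T : SimpleGraph V} (hT : T.IsTree)
    (k d : ℕ) (w : Sym2 V → ℕ) :
    ∃ (X Y : Set V) (fV : V → ℕ), IsBipartitionOf T X Y ∧
      KDTotalVertexCond T X Y k d fV (fun e => k + w e * d) ∧
      ∀ ⦃u v : V⦄, T.Adj u v → Nat.dist (fV u) (fV v) = k + w s(u, v) * d := by
  classical
  obtain ⟨s, P, hs⟩ := hT.exists_sum_eq_weight (fun e => (w e : ℤ))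
  obtain ⟨N, hN⟩ := (Set.finite_range fun v => (s v).natAbs).bddAbove
  have hN (v : V) : (s v).natAbs ≤ N := hN ⟨v, rfl⟩
  let fV : V → ℕ := fun v =>
    if P v then (N - s v).toNat * d else k + (N + s v).toNat * d
  have key : ∀ ⦃u v : V⦄, T.Adj u v → P u → ¬ P v → fV v = fV u + (k + w s(u, v) * d) := by
    intro u v h hPu hPv
    have hsum := (hs h).1
    have hu := hN u
    have hv := hN v
    have : (N + s v).toNat = (N - s u).toNat + w s(u, v) := by omega
    simp only [fV, if_pos hPu, if_neg hPv, this]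
    ring
  refine ⟨{v | P v}, {v | ¬ P v}, fV, ⟨fun v => em (P v), ?_, ?_⟩, ⟨?_, ?_, ?_⟩, ?_⟩
  · exact Set.disjoint_left.2 fun v h h' => h' h
  · intro u v h
    have := (hs h).2
    simp only [Set.mem_ofPred_eq]
    tauto
  · intro x hx
    simp only [fV, if_pos (show P x from hx)]
    exact Dvd.intro_left _ rfl
  · intro y hy
    exact ⟨_, if_neg hy⟩
  · exact fun u v _ => ⟨_, rfl⟩
  · intro u v h
    by_cases hPu : P u
    · rw [key h hPu ((hs h).2.1 hPu), Nat.dist_eq_sub_of_le (Nat.le_add_right _ _),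
        Nat.add_sub_cancel_left]
    · have hPv : P v := by have := (hs h).2; tauto
      rw [key h.symm hPv hPu, Nat.dist_eq_sub_of_le_right (Nat.le_add_right _ _),
        Nat.add_sub_cancel_left, Sym2.eq_swap]

/-- Edges of a finite graph can be numbered `0, …, q - 1`. -/
theorem exists_edge_numbering {V : Type} [Finite V] (G : SimpleGraph V) :
    ∃ w : Sym2 V → ℕ, (∀ ⦃u v : V⦄, G.Adj u v → w s(u, v) < Nat.card G.edgeSet) ∧
      ∀ j < Nat.card G.edgeSet, ∃ u v, G.Adj u v ∧ w s(u, v) = j := by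
  classical
  let φ := Finite.equivFin G.edgeSet
  refine ⟨fun e => if h : e ∈ G.edgeSet then φ ⟨e, h⟩ else 0, fun u v h => ?_, fun j hj => ?_⟩
  · have h' : s(u, v) ∈ G.edgeSet := h
    simp only [dif_pos h', Fin.is_lt]
  · obtain ⟨⟨e, he⟩, hφ⟩ := φ.surjective ⟨j, hj⟩
    induction e with
    | _ u v => exact ⟨u, v, he, by simp only [dif_pos he, hφ]⟩

/-- Every tree with at least one edge admits a graceful-difference
`(k,d)`-total coloring and an odd-edge graceful-difference `(k,d)`-total coloring. -/
theorem tree_graceful_difference_kd_total_colorings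
    {V : Type} [Fintype V] [DecidableEq V]
    (T : SimpleGraph V) (hT : T.IsTree)
    (hq : 1 ≤ Nat.card T.edgeSet)
    (k d : ℕ) (hk : 1 ≤ k) (hd : 1 ≤ d) :
    (∃ (X Y : Set V) (fV : V → ℕ) (fE : Sym2 V → ℕ),
        IsBipartitionOf T X Y ∧
        GracefulDifferenceKDTotalColoring T X Y k d (Nat.card T.edgeSet) fV fE) ∧
    (∃ (X Y : Set V) (fV : V → ℕ) (fE : Sym2 V → ℕ),
        IsBipartitionOf T X Y ∧
        OddEdgeGracefulDifferenceKDTotalColoring T X Y k d (Nat.card T.edgeSet) fV fE) := by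
  obtain ⟨w, hlt, hsurj⟩ := exists_edge_numbering T
  constructor
  · obtain ⟨X, Y, fV, hXY, hcond, hdist⟩ := exists_vertexColoring_dist_eq hT k d w
    refine ⟨X, Y, fV, _, hXY, hcond, ⟨0, fun u v h => by simp [hdist h]⟩, ?_⟩
    ext c
    constructor
    · rintro ⟨u, v, h, rfl⟩
      exact ⟨_, hlt h, rfl⟩
    · rintro ⟨j, hj, rfl⟩
      obtain ⟨u, v, h, rfl⟩ := hsurj j hj
      exact ⟨u, v, h, rfl⟩
  · obtain ⟨X, Y, fV, hXY, hcond, hdist⟩ :=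
      exists_vertexColoring_dist_eq hT k d (fun e => 2 * (w e + 1) - 1)
    refine ⟨X, Y, fV, _, hXY, hcond, ⟨0, fun u v h => by simp [hdist h]⟩, ?_⟩
    ext c
    constructor
    · rintro ⟨u, v, h, rfl⟩
      exact ⟨w s(u, v) + 1, Nat.le_add_left _ _, hlt h, rfl⟩
    · rintro ⟨j, hj, hjq, rfl⟩
      obtain ⟨u, v, h, hw⟩ := hsurj (j - 1) (by omega)
      exact ⟨u, v, h, by simp only [hw, Nat.sub_add_cancel hj]⟩
end

section
/- Let k ≥ 1 and d ≥ 1 be integers. If a connected graph G (necessarily bipartite, with q ≥ 1 edges) admits a set-ordered graceful labeling, then G admits a graceful-difference (k,d)-total coloring and an odd-edge graceful-difference (k,d)-total coloring. -/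
open Classical in
/-- The vertex coloring `m d f` on `X`, shifted by `k` off `X`. -/
noncomputable def scaledVertexColor {V : Type} (X : Set V) (f : V → ℕ) (k d m : ℕ) (v : V) : ℕ :=
  if v ∈ X then m * f v * d else k + m * f v * d

/-- The edge coloring `uv ↦ k + (m |f(u) - f(v)| - 1) d`. -/
def scaledEdgeColor {V : Type} (f : V → ℕ) (k d m : ℕ) : Sym2 V → ℕ :=
  Sym2.lift ⟨fun u v => k + (m * Nat.dist (f u) (f v) - 1) * d,
    fun u v => by simp only [Nat.dist_comm]⟩

@[simp]
theorem scaledEdgeColor_mk {V : Type} (f : V → ℕ) (k d m : ℕ) (u v : V) :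
    scaledEdgeColor f k d m s(u, v) = k + (m * Nat.dist (f u) (f v) - 1) * d := rfl

theorem kdTotalVertexCond_scaled {V : Type} {G : SimpleGraph V} {X Y : Set V}
    (hbip : IsBipartitionOf G X Y) (f : V → ℕ) (k d m : ℕ) :
    KDTotalVertexCond G X Y k d (scaledVertexColor X f k d m) (scaledEdgeColor f k d m) := by
  refine ⟨fun x hx => ?_, fun y hy => ⟨m * f y, ?_⟩, fun u v _ => ⟨_, scaledEdgeColor_mk ..⟩⟩
  · simp [scaledVertexColor, hx]
  · simp [scaledVertexColor, Set.disjoint_right.1 hbip.2.1 hy]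

theorem dist_scaledVertexColor {V : Type} {X : Set V} {f : V → ℕ} (k d m : ℕ) {x y : V}
    (hx : x ∈ X) (hy : y ∉ X) (hxy : f x < f y) :
    Nat.dist (scaledVertexColor X f k d m x) (scaledVertexColor X f k d m y) =
      k + m * Nat.dist (f x) (f y) * d := by
  obtain ⟨t, ht⟩ := Nat.exists_eq_add_of_lt hxy
  have hdist : Nat.dist (f x) (f y) = t + 1 := by
    rw [Nat.dist_eq_sub_of_le hxy.le]; lia
  have hsum : k + m * f y * d = m * f x * d + (k + m * (t + 1) * d) := by
    rw [ht]; ring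
  rw [hdist, scaledVertexColor, scaledVertexColor, if_pos hx, if_neg hy, hsum,
    Nat.dist_eq_sub_of_le (Nat.le_add_right _ _), Nat.add_sub_cancel_left]

theorem natAbs_dist_sub_scaledEdgeColor {V : Type} {G : SimpleGraph V} {X Y : Set V}
    (hbip : IsBipartitionOf G X Y) {f : V → ℕ} (hf : ∀ x ∈ X, ∀ y ∈ Y, f x < f y)
    (k d : ℕ) {m : ℕ} (hm : 1 ≤ m) {u v : V} (huv : G.Adj u v) :
    ((Nat.dist (scaledVertexColor X f k d m u) (scaledVertexColor X f k d m v) : ℤ) -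
      (scaledEdgeColor f k d m s(u, v) : ℤ)).natAbs = d := by
  wlog hu : u ∈ X ∧ v ∈ Y generalizing u v
  · have hvu := (hbip.2.2 huv).resolve_left hu
    rw [Nat.dist_comm, Sym2.eq_swap]
    exact this huv.symm hvu.symm
  have hlt := hf u hu.1 v hu.2
  rw [dist_scaledVertexColor k d m hu.1 (Set.disjoint_right.1 hbip.2.1 hu.2) hlt,
    scaledEdgeColor_mk]
  have hpos : 1 ≤ m * Nat.dist (f u) (f v) :=
    Nat.mul_pos hm (Nat.dist_pos_of_ne hlt.ne)
  obtain ⟨t, ht⟩ := Nat.exists_eq_add_of_le' hpos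
  rw [ht, Nat.add_sub_cancel]
  push_cast
  ring_nf
  simp

theorem edgeColorSet_scaledEdgeColor {V : Type} {G : SimpleGraph V} {f : V → ℕ} {q : ℕ}
    (hf : {c : ℕ | ∃ u v : V, G.Adj u v ∧ Nat.dist (f u) (f v) = c} = Set.Icc 1 q)
    (k d m : ℕ) :
    EdgeColorSet G (scaledEdgeColor f k d m) =
      {c : ℕ | ∃ j : ℕ, 1 ≤ j ∧ j ≤ q ∧ c = k + (m * j - 1) * d} := by
  ext c
  constructor
  · rintro ⟨u, v, huv, rfl⟩
    have hmem : Nat.dist (f u) (f v) ∈ Set.Icc 1 q := hf ▸ ⟨u, v, huv, rfl⟩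
    exact ⟨_, hmem.1, hmem.2, rfl⟩
  · rintro ⟨j, hj, hjq, rfl⟩
    have hmem : j ∈ {c : ℕ | ∃ u v : V, G.Adj u v ∧ Nat.dist (f u) (f v) = c} :=
      hf ▸ ⟨hj, hjq⟩
    obtain ⟨u, v, huv, rfl⟩ := hmem
    exact ⟨u, v, huv, rfl⟩

theorem arithProgSet_eq (k d q : ℕ) :
    ArithProgSet k d q = {c : ℕ | ∃ j : ℕ, 1 ≤ j ∧ j ≤ q ∧ c = k + (1 * j - 1) * d} := by
  ext c
  constructor
  · rintro ⟨j, hj, rfl⟩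
    exact ⟨j + 1, by lia, hj, by simp⟩
  · rintro ⟨j, hj, hjq, rfl⟩
    exact ⟨j - 1, by lia, by simp⟩

/-- **STATEMENT.** If a connected (bipartite) graph admits a set-ordered graceful labeling,
then it admits the stated `(k,d)`-total coloring and its odd-edge variant. -/
theorem set_ordered_graceful_to_graceful_difference_kd
    {V : Type} [Fintype V] [DecidableEq V]
    (G : SimpleGraph V) (X Y : Set V) (f : V → ℕ)
    (hconn : G.Connected) (hbip : IsBipartitionOf G X Y)
    (hq : 1 ≤ Nat.card G.edgeSet)
    (hsog : SetOrderedGracefulLabeling G X Y f (Nat.card G.edgeSet))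
    (k d : ℕ) (hk : 1 ≤ k) (hd : 1 ≤ d) :
    (∃ (X' Y' : Set V) (fV : V → ℕ) (fE : Sym2 V → ℕ),
        IsBipartitionOf G X' Y' ∧
        GracefulDifferenceKDTotalColoring G X' Y' k d (Nat.card G.edgeSet) fV fE) ∧
    (∃ (X' Y' : Set V) (fV : V → ℕ) (fE : Sym2 V → ℕ),
        IsBipartitionOf G X' Y' ∧
        OddEdgeGracefulDifferenceKDTotalColoring G X' Y' k d (Nat.card G.edgeSet) fV fE) := by
  obtain ⟨-, -, hlt, hset⟩ := hsog
  refine ⟨⟨X, Y, scaledVertexColor X f k d 1, scaledEdgeColor f k d 1, hbip,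
      kdTotalVertexCond_scaled hbip f k d 1, ⟨d, fun u v huv => ?_⟩, ?_⟩,
    ⟨X, Y, scaledVertexColor X f k d 2, scaledEdgeColor f k d 2, hbip,
      kdTotalVertexCond_scaled hbip f k d 2, ⟨d, fun u v huv => ?_⟩, ?_⟩⟩
  · exact natAbs_dist_sub_scaledEdgeColor hbip hlt k d le_rfl huv
  · rw [edgeColorSet_scaledEdgeColor hset, arithProgSet_eq]
  · exact natAbs_dist_sub_scaledEdgeColor hbip hlt k d one_le_two huv
  · exact edgeColorSet_scaledEdgeColor hset k d 2
end

section
/- Let k ≥ 1 and d ≥ 1 be integers. If a connected graph G (necessarily bipartite, with q ≥ 1 edges) admits a set-ordered graceful labeling, then G admits an edge-magic (k,d)-total coloring and an odd-edge edge-magic (k,d)-total coloring. -/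
/-- Scaling a set-ordered graceful labeling by `s` and reflecting it on `Y` gives a
`(k,d)`-total coloring with constant edge sums and edge colors `k + (s * l - 1) * d`,
where `l` runs over the graceful edge labels `1, …, q`. -/
theorem SetOrderedGracefulLabeling.exists_edgeMagic_scaled {V : Type} {G : SimpleGraph V}
    {X Y : Set V} {f : V → ℕ} {q : ℕ} (hbip : IsBipartitionOf G X Y)
    (hf : SetOrderedGracefulLabeling G X Y f q) (k d : ℕ) {s : ℕ} (hs : 1 ≤ s) :
    ∃ (fV : V → ℕ) (fE : Sym2 V → ℕ),
      KDTotalVertexCond G X Y k d fV fE ∧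
      (∃ c : ℕ, ∀ ⦃u v : V⦄, G.Adj u v → fV u + fE s(u, v) + fV v = c) ∧
      EdgeColorSet G fE = {c : ℕ | ∃ l : ℕ, 1 ≤ l ∧ l ≤ q ∧ c = k + (s * l - 1) * d} := by
  classical
  obtain ⟨-, hle, hlt, hedge⟩ := hf
  obtain ⟨-, hdisj, hadj⟩ := hbip
  have hnotX : ∀ y ∈ Y, y ∉ X := fun y hy hx => Set.disjoint_left.mp hdisj hx hy
  let fV : V → ℕ := fun v => if v ∈ X then s * f v * d else k + s * (q - f v) * d
  let fE : Sym2 V → ℕ := Sym2.lift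
    ⟨fun u v => k + (s * Nat.dist (f u) (f v) - 1) * d, fun u v => by simp only [Nat.dist_comm]⟩
  have hfE : ∀ u v, fE s(u, v) = k + (s * Nat.dist (f u) (f v) - 1) * d := fun _ _ => rfl
  have hsum : ∀ x ∈ X, ∀ y ∈ Y, fV x + fE s(x, y) + fV y = 2 * k + (s * q - 1) * d := by
    intro x hx y hy
    obtain ⟨a, ha⟩ := Nat.exists_eq_add_of_lt (hlt x hx y hy)
    obtain ⟨b, hb⟩ := Nat.exists_eq_add_of_le (hle y)
    obtain ⟨t, rfl⟩ := Nat.exists_eq_add_of_le hs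
    have hdist : Nat.dist (f x) (f y) = a + 1 := by
      rw [Nat.dist_eq_sub_of_le (hlt x hx y hy).le]
      omega
    have hrefl : q - f y = b := by omega
    have hedge_coef : (1 + t) * (a + 1) - 1 = a + t * (a + 1) := by
      rw [add_mul, one_mul]
      omega
    have hsum_coef : (1 + t) * q - 1 = f x + a + b + t * q := by
      rw [add_mul, one_mul]
      omega
    simp only [fV, if_pos hx, if_neg (hnotX y hy), hfE, hdist, hrefl, hedge_coef, hsum_coef]
    rw [hb, ha]
    ring
  refine ⟨fV, fE, ⟨fun x hx => ?_, fun y hy => ?_, fun u v _ => ⟨_, hfE u v⟩⟩,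
    ⟨2 * k + (s * q - 1) * d, fun u v huv => ?_⟩, ?_⟩
  · simp only [fV, if_pos hx]
    exact dvd_mul_left d _
  · exact ⟨s * (q - f y), if_neg (hnotX y hy)⟩
  · rcases hadj huv with ⟨hu, hv⟩ | ⟨hu, hv⟩
    · exact hsum u hu v hv
    · rw [← hsum v hv u hu, Sym2.eq_swap]
      ring
  · ext c
    constructor
    · rintro ⟨u, v, huv, rfl⟩
      obtain ⟨h1, h2⟩ : Nat.dist (f u) (f v) ∈ Set.Icc 1 q := hedge ▸ ⟨u, v, huv, rfl⟩
      exact ⟨_, h1, h2, hfE u v⟩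
    · rintro ⟨l, h1, h2, rfl⟩
      obtain ⟨u, v, huv, rfl⟩ := hedge.symm ▸ Set.mem_Icc.mpr ⟨h1, h2⟩
      exact ⟨u, v, huv, hfE u v⟩

/-- **STATEMENT.** If a connected (bipartite) graph admits a set-ordered graceful labeling,
then it admits the stated `(k,d)`-total coloring and its odd-edge variant. -/
theorem set_ordered_graceful_to_edge_magic_kd
    {V : Type} [Fintype V] [DecidableEq V]
    (G : SimpleGraph V) (X Y : Set V) (f : V → ℕ)
    (hconn : G.Connected) (hbip : IsBipartitionOf G X Y)
    (hq : 1 ≤ Nat.card G.edgeSet)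
    (hsog : SetOrderedGracefulLabeling G X Y f (Nat.card G.edgeSet))
    (k d : ℕ) (hk : 1 ≤ k) (hd : 1 ≤ d) :
    (∃ (X' Y' : Set V) (fV : V → ℕ) (fE : Sym2 V → ℕ),
        IsBipartitionOf G X' Y' ∧
        EdgeMagicKDTotalColoring G X' Y' k d (Nat.card G.edgeSet) fV fE) ∧
    (∃ (X' Y' : Set V) (fV : V → ℕ) (fE : Sym2 V → ℕ),
        IsBipartitionOf G X' Y' ∧
        OddEdgeEdgeMagicKDTotalColoring G X' Y' k d (Nat.card G.edgeSet) fV fE) := by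
  obtain ⟨fV, fE, hcond, hmagic, hcolors⟩ :=
    hsog.exists_edgeMagic_scaled hbip k d le_rfl
  obtain ⟨gV, gE, hcond', hmagic', hcolors'⟩ :=
    hsog.exists_edgeMagic_scaled hbip k d one_le_two
  refine ⟨⟨X, Y, fV, fE, hbip, hcond, hmagic, ?_⟩, ⟨X, Y, gV, gE, hbip, hcond', hmagic', hcolors'⟩⟩
  rw [hcolors]
  ext c
  constructor
  · rintro ⟨l, h1, h2, rfl⟩
    exact ⟨l - 1, by omega, by rw [one_mul]⟩
  · rintro ⟨j, hj, rfl⟩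
    exact ⟨j + 1, by omega, by omega, by simp⟩
end

section
/- Let k ≥ 1 and d ≥ 1 be integers. If a connected graph G (necessarily bipartite, with q ≥ 1 edges) admits a set-ordered graceful labeling, then G admits a felicitous-difference (k,d)-total coloring and an odd-edge felicitous-difference (k,d)-total coloring. -/
/-- From a set-ordered graceful labeling `f` and a step multiplier `m ≥ 1`, coloring `x ∈ X` by
`m (q - f x) d`, `y ∈ Y` by `k + m (f y) d` and an edge `uv` by `k + (m |f u - f v| - 1) d`
keeps `|f(u) + f(v) - f(uv)|` constant. -/
theorem SetOrderedGracefulLabeling.exists_felicitousDifference {V : Type} {G : SimpleGraph V}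
    {X Y : Set V} {f : V → ℕ} {q : ℕ} (hf : SetOrderedGracefulLabeling G X Y f q)
    (hbip : IsBipartitionOf G X Y) (k d : ℕ) {m : ℕ} (hm : 1 ≤ m) :
    ∃ (fV : V → ℕ) (fE : Sym2 V → ℕ), KDTotalVertexCond G X Y k d fV fE ∧
      (∃ c : ℕ, ∀ ⦃u v : V⦄, G.Adj u v →
        (((fV u : ℤ) + (fV v : ℤ)) - (fE s(u, v) : ℤ)).natAbs = c) ∧
      EdgeColorSet G fE = (fun j => k + (m * j - 1) * d) '' Set.Icc 1 q := by
  classical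
  obtain ⟨-, hle, hlt, hset⟩ := hf
  obtain ⟨-, hdisj, hadj⟩ := hbip
  let fV : V → ℕ := fun v => if v ∈ X then m * (q - f v) * d else k + m * f v * d
  let fE : Sym2 V → ℕ := Sym2.lift ⟨fun u v => k + (m * Nat.dist (f u) (f v) - 1) * d,
    fun u v => by simp only [Nat.dist_comm]⟩
  have hX : ∀ x ∈ X, fV x = m * (q - f x) * d := fun x hx => if_pos hx
  have hY : ∀ y ∈ Y, fV y = k + m * f y * d := fun y hy =>
    if_neg fun hx => Set.disjoint_left.mp hdisj hx hy
  have hE : ∀ u v, fE s(u, v) = k + (m * Nat.dist (f u) (f v) - 1) * d := fun _ _ => rfl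
  have hdiff : ∀ x ∈ X, ∀ y ∈ Y,
      (fV x : ℤ) + fV y - fE s(x, y) = ((m * q + 1) * d : ℕ) := by
    intro x hx y hy
    have hxy := hlt x hx y hy
    have hpos : 1 ≤ m * (f y - f x) := Nat.mul_pos hm (Nat.sub_pos_of_lt hxy)
    rw [hX x hx, hY y hy, hE, Nat.dist_eq_sub_of_le hxy.le]
    push_cast [Nat.cast_sub hpos, Nat.cast_sub hxy.le, Nat.cast_sub (hle x)]
    ring
  refine ⟨fV, fE, ⟨fun x hx => ?_, fun y hy => ⟨_, hY y hy⟩, fun u v _ => ⟨_, hE u v⟩⟩,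
    ⟨(m * q + 1) * d, fun u v huv => ?_⟩, ?_⟩
  · rw [hX x hx]
    exact dvd_mul_left _ _
  · rcases hadj huv with ⟨hu, hv⟩ | ⟨hu, hv⟩
    · rw [hdiff u hu v hv, Int.natAbs_natCast]
    · rw [add_comm, Sym2.eq_swap, hdiff v hv u hu, Int.natAbs_natCast]
  · rw [← hset]
    ext c
    constructor
    · rintro ⟨u, v, huv, rfl⟩
      exact ⟨_, ⟨u, v, huv, rfl⟩, (hE u v).symm⟩
    · rintro ⟨_, ⟨u, v, huv, rfl⟩, rfl⟩
      exact ⟨u, v, huv, hE u v⟩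

theorem arithProgSet_eq_image (k d q : ℕ) :
    ArithProgSet k d q = (fun j => k + (1 * j - 1) * d) '' Set.Icc 1 q := by
  ext c
  constructor
  · rintro ⟨j, hj, rfl⟩
    exact ⟨j + 1, ⟨by omega, by omega⟩, by simp⟩
  · rintro ⟨j, ⟨h1, h2⟩, rfl⟩
    exact ⟨j - 1, by omega, by simp⟩

theorem oddArithProgSet_eq_image (k d q : ℕ) :
    OddArithProgSet k d q = (fun j => k + (2 * j - 1) * d) '' Set.Icc 1 q := by
  ext c
  constructor
  · rintro ⟨j, h1, h2, rfl⟩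
    exact ⟨j, ⟨h1, h2⟩, rfl⟩
  · rintro ⟨j, ⟨h1, h2⟩, rfl⟩
    exact ⟨j, h1, h2, rfl⟩

/-- **STATEMENT.** If a connected (bipartite) graph admits a set-ordered graceful labeling,
then it admits the stated `(k,d)`-total coloring and its odd-edge variant. -/
theorem set_ordered_graceful_to_felicitous_difference_kd
    {V : Type} [Fintype V] [DecidableEq V]
    (G : SimpleGraph V) (X Y : Set V) (f : V → ℕ)
    (hconn : G.Connected) (hbip : IsBipartitionOf G X Y)
    (hq : 1 ≤ Nat.card G.edgeSet)
    (hsog : SetOrderedGracefulLabeling G X Y f (Nat.card G.edgeSet))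
    (k d : ℕ) (hk : 1 ≤ k) (hd : 1 ≤ d) :
    (∃ (X' Y' : Set V) (fV : V → ℕ) (fE : Sym2 V → ℕ),
        IsBipartitionOf G X' Y' ∧
        FelicitousDifferenceKDTotalColoring G X' Y' k d (Nat.card G.edgeSet) fV fE) ∧
    (∃ (X' Y' : Set V) (fV : V → ℕ) (fE : Sym2 V → ℕ),
        IsBipartitionOf G X' Y' ∧
        OddEdgeFelicitousDifferenceKDTotalColoring G X' Y' k d (Nat.card G.edgeSet) fV fE) := by
  constructor
  · obtain ⟨fV, fE, hcond, hconst, hcolors⟩ :=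
      hsog.exists_felicitousDifference hbip k d le_rfl
    exact ⟨X, Y, fV, fE, hbip, hcond, hconst, hcolors.trans (arithProgSet_eq_image k d _).symm⟩
  · obtain ⟨fV, fE, hcond, hconst, hcolors⟩ :=
      hsog.exists_felicitousDifference hbip k d one_le_two
    exact ⟨X, Y, fV, fE, hbip, hcond, hconst, hcolors.trans (oddArithProgSet_eq_image k d _).symm⟩
end

section
/- Let m, n ≥ 1 and k ≥ 1, d ≥ 1 be integers. The complete bipartite graph K_{m,n}, with parts X = {x_1, …, x_m} and Y = {y_1, …, y_n}, admits a graceful (k,d)-total coloring; explicitly, the map f defined by f(x_j) = (j − 1)d for j ∈ {1, …, m}, f(y_i) = k + (m − 1)d + m(i − 1)d for i ∈ {1, …, n}, and f(x_j y_i) = f(y_i) − f(x_j) = k + (mi − j)d for all i, j, is a graceful (k,d)-total coloring of K_{m,n}, whose edge colors are exactly {k + jd : 0 ≤ j ≤ mn − 1}. -/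
/-- The explicit vertex coloring of `K_{m,n}` (0-indexed):
`f(x_j) = j·d` and `f(y_i) = k + (m-1)·d + m·i·d`. -/
def KmnVertexColoring (m n k d : ℕ) : Fin m ⊕ Fin n → ℕ
  | Sum.inl j => j * d
  | Sum.inr i => k + (m - 1) * d + m * i * d

/-- The induced edge coloring `f(xy) = |f(x) - f(y)|` of `K_{m,n}`. -/
def KmnEdgeColoring (m n k d : ℕ) : Sym2 (Fin m ⊕ Fin n) → ℕ :=
  Sym2.lift ⟨fun x y => Nat.dist (KmnVertexColoring m n k d x) (KmnVertexColoring m n k d y),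
    fun _ _ => Nat.dist_comm _ _⟩

/-- The color of `y_i` exceeds that of `x_j` by `k + (m·i + (m - 1) - j)·d`. -/
lemma KmnVertexColoring_inr_eq_add (m n k d : ℕ) (j : Fin m) (i : Fin n) :
    KmnVertexColoring m n k d (Sum.inr i) =
      k + (m * (i : ℕ) + (m - 1) - (j : ℕ)) * d + KmnVertexColoring m n k d (Sum.inl j) := by
  obtain ⟨t, ht⟩ : ∃ t, m * (i : ℕ) + (m - 1) = t + j :=
    ⟨m * (i : ℕ) + (m - 1) - j, by have := j.isLt; omega⟩
  simp only [KmnVertexColoring]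
  rw [ht, Nat.add_sub_cancel]
  linear_combination d * ht

lemma KmnEdgeColoring_inl_inr (m n k d : ℕ) (j : Fin m) (i : Fin n) :
    KmnEdgeColoring m n k d s(Sum.inl j, Sum.inr i) =
      k + (m * (i : ℕ) + (m - 1) - (j : ℕ)) * d := by
  change Nat.dist (KmnVertexColoring m n k d (Sum.inl j))
    (KmnVertexColoring m n k d (Sum.inr i)) = _
  rw [KmnVertexColoring_inr_eq_add m n k d j i, Nat.dist_eq_sub_of_le (Nat.le_add_left _ _),
    Nat.add_sub_cancel]

/-- Every edge of `K_{m,n}` is of the form `x_j y_i`. -/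
lemma completeBipartiteGraph_adj_sym2_eq {α β : Type*} {u v : α ⊕ β}
    (h : (completeBipartiteGraph α β).Adj u v) :
    ∃ (a : α) (b : β), s(u, v) = s(Sum.inl a, Sum.inr b) := by
  rcases u with a | b <;> rcases v with a' | b' <;> simp at h
  · exact ⟨a, b', rfl⟩
  · exact ⟨a', b, Sym2.eq_swap⟩

lemma KmnEdgeColoring_edgeColorSet (m n k d : ℕ) :
    EdgeColorSet (completeBipartiteGraph (Fin m) (Fin n)) (KmnEdgeColoring m n k d) =
      ArithProgSet k d (m * n) := by
  ext c
  constructor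
  · rintro ⟨u, v, huv, rfl⟩
    obtain ⟨j, i, hji⟩ := completeBipartiteGraph_adj_sym2_eq huv
    refine ⟨_, ?_, hji ▸ KmnEdgeColoring_inl_inr m n k d j i⟩
    have hi : m * ((i : ℕ) + 1) ≤ m * n := Nat.mul_le_mul_left m i.isLt
    have hj := j.isLt
    rw [Nat.mul_add_one] at hi
    omega
  · rintro ⟨t, ht, rfl⟩
    have hm : 0 < m := Nat.pos_of_mul_pos_right (Nat.zero_lt_of_lt ht)
    have hr := Nat.mod_lt t hm
    refine ⟨Sum.inl ⟨m - 1 - t % m, by omega⟩,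
      Sum.inr ⟨t / m, Nat.div_lt_of_lt_mul ht⟩, by simp, ?_⟩
    rw [KmnEdgeColoring_inl_inr]
    have hdiv := Nat.div_add_mod t m
    congr 2
    dsimp only
    omega

/-- The explicit map above is a graceful `(k,d)`-total coloring of the
complete bipartite graph `K_{m,n}`, with edge colors exactly `{k + jd : 0 ≤ j ≤ mn - 1}`;
the edge `x_j y_i` (1-indexed: `f(x_j y_i) = k + (mi - j)d`) receives, 0-indexed, the color
`k + (m·i + (m - 1) - j)·d = f(y_i) - f(x_j)`. -/
theorem completeBipartiteGraph_graceful_kd_total_coloring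
    (m n k d : ℕ) (hm : 1 ≤ m) (hn : 1 ≤ n) (hk : 1 ≤ k) (hd : 1 ≤ d) :
    GracefulKDTotalColoring (completeBipartiteGraph (Fin m) (Fin n))
      (Set.range Sum.inl) (Set.range Sum.inr) k d (m * n)
      (KmnVertexColoring m n k d) (KmnEdgeColoring m n k d) ∧
    (∀ (j : Fin m) (i : Fin n),
      KmnEdgeColoring m n k d s(Sum.inl j, Sum.inr i)
        = KmnVertexColoring m n k d (Sum.inr i) - KmnVertexColoring m n k d (Sum.inl j) ∧
      KmnEdgeColoring m n k d s(Sum.inl j, Sum.inr i)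
        = k + (m * (i : ℕ) + (m - 1) - (j : ℕ)) * d) := by
  refine ⟨⟨⟨?_, ?_, ?_⟩, fun _ _ _ => rfl, KmnEdgeColoring_edgeColorSet m n k d⟩,
    fun j i => ⟨?_, KmnEdgeColoring_inl_inr m n k d j i⟩⟩
  · rintro _ ⟨j, rfl⟩
    exact Dvd.intro_left _ rfl
  · rintro _ ⟨i, rfl⟩
    exact ⟨m - 1 + m * i, by simp only [KmnVertexColoring]; ring⟩
  · intro u v huv
    obtain ⟨j, i, hji⟩ := completeBipartiteGraph_adj_sym2_eq huv
    exact ⟨_, hji ▸ KmnEdgeColoring_inl_inr m n k d j i⟩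
  · rw [KmnEdgeColoring_inl_inr, KmnVertexColoring_inr_eq_add m n k d j i, Nat.add_sub_cancel]
end
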